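/- A discrete group G is C*-simple if and only if for every bounded linear functional φ on C*_λ(G), the weak* closed convex hull of the orbit {g·φ : g ∈ G} contains φ(1)·τ_λ. -/

import Mathlib

noncomputable section
open scoped ENNReal ComplexOrder lp
open MeasureTheory
set_option maxHeartbeats 1000000
set_option synthInstance.maxHeartbeats 1000000

universe u

variable {G : Type u} [Group G]

theorem translat_mem (g : G) (f : ℓ²(G, ℂ)) : Memℓp (fun h => f (g⁻¹ * h)) 2 := by
  have hf : Summable fun i : G => ‖f i‖ ^ (2 : ℝ≥0∞).toReal :=
    (memℓp_gen_iff (by norm_num)).1 (lp.memℓp f)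
  exact memℓp_gen ((Equiv.mulLeft g⁻¹).summable_iff.2 hf)

/-- The left regular representation of `g ∈ G` as a linear isometric bijection of `ℓ²(G)`,
given by `(λ_g ξ)(h) = ξ(g⁻¹ h)`. -/
def lregE (g : G) : ℓ²(G, ℂ) ≃ₗᵢ[ℂ] ℓ²(G, ℂ) :=
{ toFun := fun f => ⟨fun h => f (g⁻¹ * h), translat_mem g f⟩
  invFun := fun f => ⟨fun h => f (g * h), by
    have := translat_mem g⁻¹ f; rw [inv_inv] at this; exact this⟩
  map_add' := by intro f₁ f₂; ext h; simp [lp.coeFn_add]; rfl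
  map_smul' := by intro c f; ext h; simp [lp.coeFn_smul]
  left_inv := by intro f; ext h; simp
  right_inv := by intro f; ext h; simp
  norm_map' := by
    intro f
    rw [lp.norm_eq_tsum_rpow (by norm_num) f, lp.norm_eq_tsum_rpow (by norm_num)]
    congr 1
    exact (Equiv.mulLeft g⁻¹).tsum_eq (fun h => ‖f h‖ ^ (2 : ℝ≥0∞).toReal) }

/-- The left regular representation `λ` as bounded operators on `ℓ²(G)`. -/
def lreg (g : G) : ℓ²(G, ℂ) →L[ℂ] ℓ²(G, ℂ) :=
  (lregE g).toContinuousLinearEquiv.toContinuousLinearMap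

variable (G) in
/-- The reduced group C*-algebra `C*_λ(G)`: the norm-closed star subalgebra of the algebra of
bounded operators on `ℓ²(G)` generated by the image of the left regular representation. -/
def redCstar : StarSubalgebra ℂ (ℓ²(G, ℂ) →L[ℂ] ℓ²(G, ℂ)) :=
  (StarAlgebra.adjoin ℂ (Set.range (lreg (G := G)))).topologicalClosure

/-- `λ_g` as an element of the reduced group C*-algebra. -/
def uu (g : G) : redCstar G :=
  ⟨lreg g, StarSubalgebra.le_topologicalClosure _ (StarAlgebra.subset_adjoin ℂ _ ⟨g, rfl⟩)⟩

variable (G) in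
/-- `G` is C*-simple: `C*_λ(G)` has no closed two-sided ideals other than `{0}` and the
whole algebra. -/
def IsCstarSimple : Prop :=
  ∀ I : TwoSidedIdeal (redCstar G), IsClosed (I : Set (redCstar G)) → I = ⊥ ∨ I = ⊤

/-- The vector `δ_e ∈ ℓ²(G)`. -/
def deltaOne : ℓ²(G, ℂ) := letI := Classical.decEq G; lp.single 2 (1 : G) 1

variable (G) in
/-- The canonical tracial state `τ_λ(a) = ⟨a δ_e, δ_e⟩` on the reduced C*-algebra, as a
weak* continuous linear functional. -/
def tau : WeakDual ℂ (redCstar G) :=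
  (innerSL ℂ (deltaOne (G := G))).comp
    ((ContinuousLinearMap.apply ℂ ℓ²(G, ℂ) (deltaOne (G := G))).comp
      { toLinearMap := (redCstar G).subtype.toLinearMap, cont := continuous_subtype_val })

attribute [irreducible] redCstar lreg lregE deltaOne uu tau

/-- The action of `G` on the dual of `C*_λ(G)`: `(g·φ)(a) = φ(λ_g⁻¹ a λ_g)`. -/
def dualAct (g : G) (φ : WeakDual ℂ (redCstar G)) : WeakDual ℂ (redCstar G) :=
{ toFun := fun a => φ (uu g⁻¹ * a * uu g)
  map_add' := by
    intro a b
    show φ (uu g⁻¹ * (a + b) * uu g) = φ (uu g⁻¹ * a * uu g) + φ (uu g⁻¹ * b * uu g)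
    rw [mul_add, add_mul, map_add]
  map_smul' := by
    intro c a
    show φ (uu g⁻¹ * (c • a) * uu g) = c • φ (uu g⁻¹ * a * uu g)
    rw [mul_smul_comm, smul_mul_assoc, _root_.map_smul]
  cont := (map_continuous φ).comp
      ((continuous_const.mul continuous_id).mul continuous_const) }

theorem dualAct_continuous (g : G) : Continuous (dualAct (G := G) g) := by
  apply WeakDual.continuous_of_continuous_eval
  intro a
  exact WeakDual.eval_continuous (uu g⁻¹ * a * uu g)

/-!
Suppose every closed convex orbit contains the scaled trace. A functional separating `1` from a
proper closed ideal vanishes on that ideal together with its whole orbit, hence so does `τ_λ`; as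
`τ_λ` is faithful, the ideal is zero.

Conversely, let `G` be C*-simple. Means on `G` form a compact convex semigroup under convolution,
and an extreme point `m` of a minimal left ideal plays the role of a point of the Furstenberg
boundary. The stabilizer of `m` is amenable, so it carries a state of `B(ℓ²(G))` which is trivial
on it; comparing this state with the trace, simplicity forces every finite `T` not containing `1`
to be conjugated off the stabilizer. A state whose restriction to `ℓ^∞(G)` is `m` vanishes at the
translations outside the stabilizer. Since every state can be averaged to such a state, no state
stays bounded away from zero on the conjugates of an element of trace zero, and Hahn–Banach turns
this into Powers' averaging property: convex combinations of conjugates of `a` converge to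
`τ_λ(a) • 1`, simultaneously for finitely many `a`.
-/

section MinimalLeftIdeal

theorem exists_minimal_closed_left_ideal {M : Type*} [Semigroup M] [TopologicalSpace M]
    [CompactSpace M] [T2Space M] [Nonempty M] (hcont : ∀ k : M, Continuous (· * k)) :
    ∃ K : Set M, K.Nonempty ∧ IsClosed K ∧ (∀ x, ∀ k ∈ K, x * k ∈ K) ∧
      ∀ k ∈ K, ∀ y ∈ K, ∃ x, x * k = y := by
  let ideals : Set (Set M) := {K | K.Nonempty ∧ IsClosed K ∧ ∀ x, ∀ k ∈ K, x * k ∈ K}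
  have huniv : Set.univ ∈ ideals :=
    ⟨Set.univ_nonempty, isClosed_univ, fun _ _ _ ↦ Set.mem_univ _⟩
  obtain ⟨K, -, hK⟩ : ∃ K ⊆ Set.univ, Minimal (· ∈ ideals) K := by
    refine zorn_superset_nonempty ideals (fun c hc hchain hne ↦ ?_) _ huniv
    refine ⟨⋂₀ c, ⟨?_, isClosed_sInter fun s hs ↦ (hc hs).2.1, fun x k hk s hs ↦
      (hc hs).2.2 x k (hk s hs)⟩, fun s hs ↦ Set.sInter_subset_of_mem hs⟩
    have : Nonempty c := hne.to_subtype
    exact IsCompact.nonempty_sInter_of_directed_nonempty_isCompact_isClosed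
      (fun s hs t ht ↦ (hchain.total hs ht).elim (fun h ↦ ⟨s, hs, subset_rfl, h⟩)
        fun h ↦ ⟨t, ht, h, subset_rfl⟩) (fun s hs ↦ (hc hs).1)
      (fun s hs ↦ (hc hs).2.1.isCompact) fun s hs ↦ (hc hs).2.1
  refine ⟨K, hK.prop.1, hK.prop.2.1, hK.prop.2.2, fun k hk y hy ↦ ?_⟩
  have hrange : Set.range (· * k) ∈ ideals := by
    refine ⟨Set.range_nonempty _, (isCompact_range (hcont k)).isClosed, ?_⟩
    rintro x _ ⟨z, rfl⟩
    exact ⟨x * z, mul_assoc x z k⟩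
  have hsub : Set.range (· * k) ⊆ K := Set.range_subset_iff.2 fun x ↦ hK.prop.2.2 x k hk
  exact hK.le_of_le hrange hsub hy

end MinimalLeftIdeal

section Mean

variable {ι : Type*}

/-- A real function bounded by `C` in absolute value, as an element of `ℓ^∞(ι)`. -/
def boundedFun (f : ι → ℝ) (C : ℝ) (hf : ∀ i, |f i| ≤ C) : ℓ^∞(ι, ℝ) :=
  ⟨f, memℓp_infty ⟨C, by rintro _ ⟨i, rfl⟩; exact hf i⟩⟩

theorem boundedFun_apply (f : ι → ℝ) (C : ℝ) (hf : ∀ i, |f i| ≤ C) (i : ι) :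
    boundedFun f C hf i = f i := rfl

theorem abs_apply_le_norm (F : ℓ^∞(ι, ℝ)) (i : ι) : |F i| ≤ ‖F‖ :=
  lp.norm_apply_le_norm ENNReal.top_ne_zero F i

variable (ι) in
/-- The set of means on `ι`, i.e. of states of `ℓ^∞(ι)`, inside the weak* dual. -/
def meanSet : Set (WeakDual ℝ ℓ^∞(ι, ℝ)) :=
  {m | m 1 = 1 ∧ ∀ F : ℓ^∞(ι, ℝ), (∀ i, 0 ≤ F i) → 0 ≤ m F}

theorem convex_meanSet : Convex ℝ (meanSet ι) := by
  intro m hm n hn a b ha hb hab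
  refine ⟨?_, fun F hF ↦ add_nonneg (mul_nonneg ha (hm.2 F hF)) (mul_nonneg hb (hn.2 F hF))⟩
  change a * m 1 + b * n 1 = 1
  rw [hm.1, hn.1, mul_one, mul_one, hab]

variable (ι) in
/-- The type of means on `ι`, with the weak* topology. -/
abbrev Mean : Type _ := meanSet ι

namespace Mean

instance : FunLike (Mean ι) ℓ^∞(ι, ℝ) ℝ where
  coe m := m.1
  coe_injective _ _ h := Subtype.ext (DFunLike.coe_injective h)

instance : ContinuousLinearMapClass (Mean ι) ℝ ℓ^∞(ι, ℝ) ℝ where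
  map_add m := map_add m.1
  map_smulₛₗ m := map_smul m.1
  map_continuous m := map_continuous m.1

protected theorem map_one (m : Mean ι) : m 1 = 1 := m.2.1

theorem map_nonneg (m : Mean ι) {F : ℓ^∞(ι, ℝ)} (hF : ∀ i, 0 ≤ F i) : 0 ≤ m F := m.2.2 F hF

theorem map_const (m : Mean ι) (c : ℝ) : m (algebraMap ℝ ℓ^∞(ι, ℝ) c) = c := by
  rw [Algebra.algebraMap_eq_smul_one, map_smul, m.map_one, smul_eq_mul, mul_one]

theorem map_mono (m : Mean ι) {F H : ℓ^∞(ι, ℝ)} (h : ∀ i, F i ≤ H i) : m F ≤ m H := by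
  have := m.map_nonneg (F := H - F) fun i ↦ sub_nonneg.2 (h i)
  rwa [map_sub, sub_nonneg] at this

theorem le_map (m : Mean ι) {F : ℓ^∞(ι, ℝ)} {c : ℝ} (h : ∀ i, c ≤ F i) : c ≤ m F :=
  (m.map_const c).symm.le.trans (m.map_mono h)

theorem map_le (m : Mean ι) {F : ℓ^∞(ι, ℝ)} {c : ℝ} (h : ∀ i, F i ≤ c) : m F ≤ c :=
  (m.map_mono h).trans (m.map_const c).le

theorem abs_map_le (m : Mean ι) {F : ℓ^∞(ι, ℝ)} {c : ℝ} (h : ∀ i, |F i| ≤ c) : |m F| ≤ c :=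
  abs_le.2 ⟨m.le_map fun i ↦ (abs_le.1 (h i)).1, m.map_le fun i ↦ (abs_le.1 (h i)).2⟩

/-- A positive unital linear functional on `ℓ^∞(ι)` is automatically continuous, hence a mean. -/
def ofPositive (φ : ℓ^∞(ι, ℝ) →ₗ[ℝ] ℝ) (hone : φ 1 = 1)
    (hφ : ∀ F : ℓ^∞(ι, ℝ), (∀ i, 0 ≤ F i) → 0 ≤ φ F) : Mean ι :=
  ⟨φ.mkContinuous 1 fun F ↦ by
    have hle (H : ℓ^∞(ι, ℝ)) (hH : ‖H‖ = ‖F‖) : φ H ≤ ‖F‖ := by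
      have := hφ (algebraMap ℝ _ ‖F‖ - H) fun i ↦
        sub_nonneg.2 <| (le_abs_self _).trans <| (abs_apply_le_norm H i).trans_eq hH
      rwa [map_sub, Algebra.algebraMap_eq_smul_one, map_smul, hone, smul_eq_mul, mul_one,
        sub_nonneg] at this
    rw [one_mul, Real.norm_eq_abs]
    exact abs_le'.2 ⟨hle F rfl, map_neg φ F ▸ hle (-F) (norm_neg F)⟩,
  hone, hφ⟩

/-- Evaluation at a point. -/
def eval (i : ι) : Mean ι :=
  ofPositive { toFun F := F i, map_add' _ _ := rfl, map_smul' _ _ := rfl } rfl fun _ hF ↦ hF i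

instance [Nonempty ι] : Nonempty (Mean ι) := ⟨eval (Classical.arbitrary ι)⟩

instance : CompactSpace (Mean ι) := by
  refine isCompact_iff_compactSpace.1 <|
    (WeakDual.isCompact_closedBall 0 1).of_isClosed_subset ?_ fun m hm ↦ ?_
  · have hset : meanSet ι =
        {m | m 1 = 1} ∩ ⋂ (F : ℓ^∞(ι, ℝ)) (_ : ∀ i, 0 ≤ F i), {m | 0 ≤ m F} := by
      ext m; simp [meanSet]
    rw [hset]
    exact (isClosed_eq (WeakDual.eval_continuous 1) continuous_const).inter <|
      isClosed_iInter fun F ↦ isClosed_iInter fun _ ↦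
        isClosed_le continuous_const (WeakDual.eval_continuous F)
  · rw [Set.mem_preimage, mem_closedBall_zero_iff]
    exact ContinuousLinearMap.opNorm_le_bound _ zero_le_one fun F ↦ by
      rw [one_mul]
      exact abs_map_le ⟨m, hm⟩ (abs_apply_le_norm F)

/-- The normalized restriction `F ↦ m (h * F) / m h` of a mean to a nonnegative weight `h`. -/
def weighted (m : Mean ι) (h : ℓ^∞(ι, ℝ)) (hh : ∀ i, 0 ≤ h i) (hm : 0 < m h) : Mean ι :=
  ofPositive ((m h)⁻¹ • (m : WeakDual ℝ ℓ^∞(ι, ℝ)).toLinearMap.comp (LinearMap.mulLeft ℝ h))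
    (by
      change (m h)⁻¹ * m (h * 1) = 1
      rw [mul_one, inv_mul_cancel₀ hm.ne'])
    fun F hF ↦ mul_nonneg (inv_nonneg.2 hm.le) <| m.map_nonneg fun g ↦ mul_nonneg (hh g) (hF g)

theorem weighted_apply (m : Mean ι) (h : ℓ^∞(ι, ℝ)) (hh : ∀ i, 0 ≤ h i) (hm : 0 < m h)
    (F : ℓ^∞(ι, ℝ)) : m.weighted h hh hm F = (m h)⁻¹ * m (h * F) := rfl

end Mean

end Mean

section Convolution

/-- Left translation of bounded functions, `(g, F) ↦ F (g * ·)`. -/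
def leftTranslate (g : G) : ℓ^∞(G, ℝ) →ₐ[ℝ] ℓ^∞(G, ℝ) where
  toFun F := boundedFun (fun h ↦ F (g * h)) ‖F‖ fun _ ↦ abs_apply_le_norm F _
  map_one' := rfl
  map_mul' _ _ := rfl
  map_zero' := rfl
  map_add' _ _ := rfl
  commutes' _ := rfl

@[simp]
theorem leftTranslate_apply (g : G) (F : ℓ^∞(G, ℝ)) (h : G) : leftTranslate g F h = F (g * h) :=
  rfl

theorem leftTranslate_leftTranslate (g h : G) (F : ℓ^∞(G, ℝ)) :
    leftTranslate g (leftTranslate h F) = leftTranslate (h * g) F := by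
  ext k; simp [mul_assoc]

theorem leftTranslate_one (F : ℓ^∞(G, ℝ)) : leftTranslate 1 F = F := by
  ext k; simp

namespace Mean

/-- The Poisson transform `F ↦ (g ↦ k (F (g * ·)))` of a mean `k` on a group. -/
def poisson (k : Mean G) : ℓ^∞(G, ℝ) →L[ℝ] ℓ^∞(G, ℝ) :=
  LinearMap.mkContinuous
    { toFun F := boundedFun (fun g ↦ k (leftTranslate g F)) ‖F‖ fun _ ↦
        k.abs_map_le fun _ ↦ abs_apply_le_norm F _
      map_add' F H := by
        ext g
        rw [lp.coeFn_add, Pi.add_apply]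
        simp only [boundedFun_apply, map_add]
      map_smul' c F := by
        ext g
        rw [lp.coeFn_smul, Pi.smul_apply]
        simp only [boundedFun_apply, map_smul, RingHom.id_apply] }
    1 fun F ↦ lp.norm_le_of_forall_le (by positivity) fun g ↦ by
      rw [one_mul]; exact k.abs_map_le fun _ ↦ abs_apply_le_norm F _

theorem poisson_apply (k : Mean G) (F : ℓ^∞(G, ℝ)) (g : G) :
    k.poisson F g = k (leftTranslate g F) := rfl

theorem leftTranslate_poisson (k : Mean G) (g : G) (F : ℓ^∞(G, ℝ)) :
    leftTranslate g (k.poisson F) = k.poisson (leftTranslate g F) := by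
  ext h
  rw [leftTranslate_apply, poisson_apply, poisson_apply, leftTranslate_leftTranslate]

theorem poisson_one (k : Mean G) : k.poisson 1 = 1 := by
  ext g
  rw [poisson_apply, map_one, k.map_one, lp.infty_coeFn_one, Pi.one_apply]

/-- Convolution of means on a group (the Arens product), `(μ * k) F = μ (P_k F)`. -/
instance : Mul (Mean G) where
  mul μ k := ⟨(μ : WeakDual ℝ ℓ^∞(G, ℝ)).comp k.poisson,
    (congrArg μ k.poisson_one).trans μ.map_one,
    fun _ hF ↦ μ.map_nonneg fun _ ↦ k.map_nonneg fun _ ↦ hF _⟩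

protected theorem mul_apply (μ k : Mean G) (F : ℓ^∞(G, ℝ)) : (μ * k) F = μ (k.poisson F) := rfl

theorem poisson_mul (μ k : Mean G) (F : ℓ^∞(G, ℝ)) :
    (μ * k).poisson F = μ.poisson (k.poisson F) := by
  ext g
  rw [poisson_apply, Mean.mul_apply, ← leftTranslate_poisson, poisson_apply]

instance : Semigroup (Mean G) where
  mul_assoc ν μ k := DFunLike.ext _ _ fun F ↦ by simp only [Mean.mul_apply, poisson_mul]

theorem continuous_mul_right (k : Mean G) : Continuous (· * k) :=
  (WeakDual.continuous_of_continuous_eval fun F ↦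
    (WeakDual.eval_continuous (k.poisson F)).comp continuous_subtype_val).subtype_mk _

end Mean

end Convolution

section BoundaryMean

/-- `m` is an extreme point of a minimal closed left ideal of the semigroup of means. -/
structure IsExtremeInMinimalIdeal (K : Set (Mean G)) (m : Mean G) : Prop where
  mul_mem : ∀ μ, ∀ k ∈ K, μ * k ∈ K
  transitive : ∀ k ∈ K, ∀ y ∈ K, ∃ μ, μ * k = y
  mem : m ∈ K
  extreme : ∀ μ ∈ K, ∀ ν ∈ K,
    (m : WeakDual ℝ ℓ^∞(G, ℝ)) ∈ openSegment ℝ (μ : WeakDual ℝ ℓ^∞(G, ℝ)) ν → μ = m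

variable (G) in
theorem exists_isExtremeInMinimalIdeal :
    ∃ (K : Set (Mean G)) (m : Mean G), IsExtremeInMinimalIdeal K m := by
  obtain ⟨K, hne, hclosed, hideal, htrans⟩ :=
    exists_minimal_closed_left_ideal (M := Mean G) Mean.continuous_mul_right
  have : LocallyConvexSpace ℝ (WeakDual ℝ ℓ^∞(G, ℝ)) := WeakBilin.locallyConvexSpace
  obtain ⟨_, ⟨m, hmK, rfl⟩, hext⟩ :=
    (hclosed.isCompact.image continuous_subtype_val).extremePoints_nonempty (hne.image _)
  exact ⟨K, m, hideal, htrans, hmK, fun μ hμ ν hν h ↦ Subtype.ext <|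
    hext (Set.mem_image_of_mem _ hμ) (Set.mem_image_of_mem _ hν) h⟩

namespace IsExtremeInMinimalIdeal

variable {K : Set (Mean G)} {m : Mean G}

theorem mul_eq_of_mem_openSegment (hm : IsExtremeInMinimalIdeal K m) {ν ν₁ ν₂ : Mean G}
    (hν : ν * m = m) (h : (ν : WeakDual ℝ ℓ^∞(G, ℝ)) ∈ openSegment ℝ ν₁.1 ν₂.1) :
    ν₁ * m = m := by
  refine hm.extreme _ (hm.mul_mem ν₁ m hm.mem) _ (hm.mul_mem ν₂ m hm.mem) ?_
  obtain ⟨a, b, ha, hb, hab, h⟩ := h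
  refine ⟨a, b, ha, hb, hab, ?_⟩
  conv_rhs => rw [← hν]
  exact congrArg (fun φ : WeakDual ℝ ℓ^∞(G, ℝ) ↦ φ.comp m.poisson) h

theorem mul_self (hm : IsExtremeInMinimalIdeal K m) : m * m = m := by
  obtain ⟨μ₁, hμ₁⟩ := hm.transitive m hm.mem m hm.mem
  let average : Mean G := ⟨(1 / 2 : ℝ) • μ₁.1 + (1 / 2 : ℝ) • m.1,
    convex_meanSet μ₁.2 m.2 (by norm_num) (by norm_num) (by norm_num)⟩
  obtain ⟨μ, hμ⟩ := hm.transitive (average * m) (hm.mul_mem _ m hm.mem) m hm.mem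
  have hsplit (F : ℓ^∞(G, ℝ)) : m F = 1 / 2 * (μ * m) F + 1 / 2 * (μ * (m * m)) F := by
    have havg (H : ℓ^∞(G, ℝ)) : (average * m) H = 1 / 2 * m H + 1 / 2 * (m * m) H := by
      conv_rhs => enter [1, 2]; rw [← hμ₁]
      rfl
    have hpoisson : (average * m).poisson F =
        (1 / 2 : ℝ) • m.poisson F + (1 / 2 : ℝ) • (m * m).poisson F := by
      ext g
      exact havg _
    conv_lhs => rw [← hμ, Mean.mul_apply, hpoisson, map_add, map_smul, map_smul]
    rfl
  have hμm : μ * m = m := by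
    refine hm.extreme _ (hm.mul_mem μ m hm.mem) _ (hm.mul_mem μ _ (hm.mul_mem m m hm.mem))
      ⟨1 / 2, 1 / 2, by norm_num, by norm_num, by norm_num, ?_⟩
    exact DFunLike.ext _ _ fun F ↦ (hsplit F).symm
  refine DFunLike.ext _ _ fun F ↦ ?_
  have := hsplit F
  rw [← mul_assoc, hμm] at this
  linarith

theorem exists_mul_mul_eq (hm : IsExtremeInMinimalIdeal K m) (ν : Mean G) :
    ∃ μ, μ * ν * m = m := by
  obtain ⟨μ, hμ⟩ := hm.transitive (ν * m) (hm.mul_mem ν m hm.mem) m hm.mem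
  exact ⟨μ, by rw [mul_assoc, hμ]⟩

theorem map_mul_poisson_of_mem_Ioo (hm : IsExtremeInMinimalIdeal K m) {ν : Mean G}
    (hν : ν * m = m) {h : ℓ^∞(G, ℝ)} (h₀ : ∀ g, 0 ≤ h g) (h₁ : ∀ g, h g ≤ 1)
    (hνh : ν h ∈ Set.Ioo 0 1) (F : ℓ^∞(G, ℝ)) :
    ν (h * m.poisson F) = m F * ν h := by
  obtain ⟨hpos, hlt⟩ := hνh
  have hsub : ν (1 - h) = 1 - ν h := by rw [map_sub, ν.map_one]
  have hpos' : 0 < ν (1 - h) := by rw [hsub]; linarith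
  let ν₁ := ν.weighted h h₀ hpos
  let ν₂ := ν.weighted (1 - h) (fun g ↦ sub_nonneg.2 (h₁ g)) hpos'
  have hmem : (ν : WeakDual ℝ ℓ^∞(G, ℝ)) ∈ openSegment ℝ ν₁.1 ν₂.1 := by
    refine ⟨ν h, ν (1 - h), hpos, hpos', by rw [hsub]; ring, DFunLike.ext _ _ fun H ↦ ?_⟩
    change ν h * ((ν h)⁻¹ * ν (h * H)) + ν (1 - h) * ((ν (1 - h))⁻¹ * ν ((1 - h) * H)) = ν H
    rw [mul_inv_cancel_left₀ hpos.ne', mul_inv_cancel_left₀ hpos'.ne', ← map_add]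
    congr 1
    ring
  have hν₁ := DFunLike.congr_fun (hm.mul_eq_of_mem_openSegment hν hmem) F
  rw [Mean.mul_apply, Mean.weighted_apply] at hν₁
  rw [← hν₁]
  field_simp

theorem map_mul_poisson (hm : IsExtremeInMinimalIdeal K m) {ν : Mean G} (hν : ν * m = m)
    (h F : ℓ^∞(G, ℝ)) : ν (h * m.poisson F) = m F * ν h := by
  let c : ℝ := (4 * (‖h‖ + 1))⁻¹
  have hc : 0 < c := by positivity
  have hch (g : G) : |c * h g| ≤ 1 / 4 := by
    rw [abs_mul, abs_of_pos hc]
    calc c * |h g| ≤ c * (‖h‖ + 1) := by gcongr; linarith [abs_apply_le_norm h g]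
      _ = 1 / 4 := by simp only [c]; field_simp
  let h' : ℓ^∞(G, ℝ) := algebraMap ℝ _ (1 / 2) + c • h
  have hle (g : G) : 1 / 4 ≤ h' g := by
    change 1 / 4 ≤ 1 / 2 + c * h g
    linarith [(abs_le.1 (hch g)).1]
  have hge (g : G) : h' g ≤ 3 / 4 := by
    change 1 / 2 + c * h g ≤ 3 / 4
    linarith [(abs_le.1 (hch g)).2]
  have key := hm.map_mul_poisson_of_mem_Ioo hν (h := h') (fun g ↦ by linarith [hle g])
    (fun g ↦ by linarith [hge g]) ⟨by linarith [ν.le_map hle], by linarith [ν.map_le hge]⟩ F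
  have hνF : ν (m.poisson F) = m F := by rw [← Mean.mul_apply, hν]
  simp only [h', add_mul, smul_mul_assoc, ← Algebra.smul_def, map_add, map_smul, smul_eq_mul,
    Mean.map_const, hνF] at key
  exact mul_left_cancel₀ hc.ne' (by linarith)

end IsExtremeInMinimalIdeal

end BoundaryMean

section Accretive

variable {A : Type*} [CStarAlgebra A]

/-- An element of a C*-algebra is accretive if its real part is positive. Positivity is spelled
out so that no order on the algebra has to be chosen. -/
def IsAccretive (a : A) : Prop := ∃ y : A, a + star a = star y * y

theorem isAccretive_iff_nonneg [PartialOrder A] [StarOrderedRing A] {a : A} :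
    IsAccretive a ↔ 0 ≤ a + star a :=
  CStarAlgebra.nonneg_iff_eq_star_mul_self.symm

theorem isAccretive_star_mul_self (a : A) : IsAccretive (star a * a) := by
  let := CStarAlgebra.spectralOrder A
  let := CStarAlgebra.spectralOrderedRing A
  rw [isAccretive_iff_nonneg, star_mul, star_star]
  exact add_nonneg (star_mul_self_nonneg a) (star_mul_self_nonneg a)

theorem isAccretive_sub_star (a : A) : IsAccretive (a - star a) :=
  ⟨0, by rw [star_sub, star_star, mul_zero]; abel⟩

theorem isAccretive_one : IsAccretive (1 : A) := by
  simpa only [star_one, one_mul] using isAccretive_star_mul_self (1 : A)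

namespace IsAccretive

theorem add {a b : A} (ha : IsAccretive a) (hb : IsAccretive b) : IsAccretive (a + b) := by
  let := CStarAlgebra.spectralOrder A
  let := CStarAlgebra.spectralOrderedRing A
  rw [isAccretive_iff_nonneg] at *
  rw [star_add, add_add_add_comm]
  exact add_nonneg ha hb

theorem smul {a : A} (ha : IsAccretive a) {c : ℝ} (hc : 0 ≤ c) : IsAccretive (c • a) := by
  obtain ⟨y, hy⟩ := ha
  refine ⟨√c • y, ?_⟩
  rw [star_smul, star_smul, star_trivial c, star_trivial √c, ← smul_add, hy, smul_mul_smul_comm,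
    Real.mul_self_sqrt hc]

theorem conj {a : A} (ha : IsAccretive a) (b : A) : IsAccretive (star b * a * b) := by
  obtain ⟨y, hy⟩ := ha
  refine ⟨y * b, ?_⟩
  calc star b * a * b + star (star b * a * b) = star b * (a + star a) * b := by
        simp only [star_mul, star_star]; noncomm_ring
    _ = star (y * b) * (y * b) := by rw [hy, star_mul]; noncomm_ring

theorem norm_smul_one_sub (a : A) : IsAccretive (‖a‖ • (1 : A) - a) := by
  let := CStarAlgebra.spectralOrder A
  let := CStarAlgebra.spectralOrderedRing A
  have hle : a + star a ≤ algebraMap ℝ A (2 * ‖a‖) :=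
    (IsSelfAdjoint.add_star_self a).le_algebraMap_norm_self.trans <|
      algebraMap_mono A <| (norm_add_le _ _).trans_eq <| by rw [norm_star, two_mul]
  rw [isAccretive_iff_nonneg, star_sub, star_smul, star_one, star_trivial]
  calc 0 ≤ algebraMap ℝ A (2 * ‖a‖) - (a + star a) := sub_nonneg.2 hle
    _ = _ := by rw [Algebra.algebraMap_eq_smul_one, two_mul, add_smul]; abel

end IsAccretive

theorem norm_add_star_le_of_isAccretive {a : A} {c : ℝ} (hc : 0 ≤ c)
    (hsub : IsAccretive (c • 1 - a)) (hadd : IsAccretive (c • 1 + a)) : ‖a + star a‖ ≤ 2 * c := by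
  let := CStarAlgebra.spectralOrder A
  let := CStarAlgebra.spectralOrderedRing A
  have hsa : IsSelfAdjoint (a + star a) := .add_star_self a
  have hscalar : algebraMap ℝ A (2 * c) = c • 1 + c • 1 := by
    rw [Algebra.algebraMap_eq_smul_one, two_mul, add_smul]
  rw [isAccretive_iff_nonneg, star_sub, star_smul, star_one, star_trivial] at hsub
  rw [isAccretive_iff_nonneg, star_add, star_smul, star_one, star_trivial] at hadd
  have hle : a + star a ≤ algebraMap ℝ A (2 * c) := by
    rw [← sub_nonneg, hscalar]
    exact hsub.trans_eq (by abel)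
  have hge : algebraMap ℝ A (-(2 * c)) ≤ a + star a := by
    rw [← sub_nonneg, map_neg, hscalar]
    exact hadd.trans_eq (by abel)
  rw [le_algebraMap_iff_spectrum_le] at hle
  rw [algebraMap_le_iff_le_spectrum] at hge
  rcases subsingleton_or_nontrivial A with _ | _
  · rw [Subsingleton.elim (a + star a) 0, norm_zero]
    positivity
  rcases CStarAlgebra.norm_or_neg_norm_mem_spectrum (a := a + star a) with h | h
  · exact hle _ h
  · exact neg_le_neg_iff.1 (hge _ h)

theorem norm_le_of_forall_isAccretive {a : A} {c : ℝ} (hc : 0 ≤ c)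
    (h : ∀ z ∈ ({1, -1, Complex.I, -Complex.I} : Set ℂ), IsAccretive (c • 1 - z • a)) :
    ‖a‖ ≤ 2 * c := by
  have hre := norm_add_star_le_of_isAccretive hc (by simpa using h 1) (by simpa using h (-1))
  have him := norm_add_star_le_of_isAccretive (a := Complex.I • a) hc (h Complex.I (by simp))
    (by simpa using h (-Complex.I))
  have hsplit : (2 : ℂ) • a =
      (a + star a) - Complex.I • (Complex.I • a + star (Complex.I • a)) := by
    rw [star_smul, smul_add, smul_smul, smul_smul, Complex.star_def, Complex.conj_I]
    simp only [mul_neg, Complex.I_mul_I, neg_neg, neg_smul, one_smul, two_smul]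
    abel
  have hnorm := norm_sub_le (a + star a) (Complex.I • (Complex.I • a + star (Complex.I • a)))
  rw [← hsplit, norm_smul, norm_smul, Complex.norm_I, Complex.norm_ofNat] at hnorm
  linarith

end Accretive

section RealState

theorem nonpos_of_forall_mul_le {x c : ℝ} (h : ∀ s, 0 ≤ s → s * x ≤ c) : x ≤ 0 := by
  by_contra! hx
  obtain ⟨n, hn⟩ := exists_nat_gt (c / x)
  exact (h n n.cast_nonneg).not_gt ((div_lt_iff₀ hx).1 hn)

/-- A real state of a C*-algebra: the real part of a state. Working with real parts makes states
compatible with means, which are functionals on real functions. -/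
structure RealState (A : Type*) [CStarAlgebra A] extends A →ₗ[ℝ] ℝ where
  map_one' : toFun 1 = 1
  map_star' : ∀ a, toFun (star a) = toFun a
  map_star_mul_self_nonneg' : ∀ a, 0 ≤ toFun (star a * a)

namespace RealState

variable {A : Type*} [CStarAlgebra A]

instance : FunLike (RealState A) A ℝ where
  coe ρ := ρ.toFun
  coe_injective ρ₁ ρ₂ h := by
    cases ρ₁; cases ρ₂; congr; exact DFunLike.coe_injective h

instance : LinearMapClass (RealState A) ℝ A ℝ where
  map_add ρ := ρ.map_add'
  map_smulₛₗ ρ := ρ.map_smul'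

variable (ρ : RealState A)

protected theorem map_one : ρ 1 = 1 := ρ.map_one'

protected theorem map_star (a : A) : ρ (star a) = ρ a := ρ.map_star' a

theorem map_star_mul_self_nonneg (a : A) : 0 ≤ ρ (star a * a) := ρ.map_star_mul_self_nonneg' a

theorem nonneg_of_isAccretive {a : A} (ha : IsAccretive a) : 0 ≤ ρ a := by
  obtain ⟨y, hy⟩ := ha
  have h := ρ.map_star_mul_self_nonneg y
  rw [← hy, map_add, ρ.map_star] at h
  linarith

theorem le_of_isAccretive {a : A} {c : ℝ} (ha : IsAccretive (c • 1 - a)) : ρ a ≤ c := by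
  have h := ρ.nonneg_of_isAccretive ha
  rw [map_sub, map_smul, ρ.map_one, smul_eq_mul, mul_one] at h
  linarith

theorem map_le_norm (a : A) : ρ a ≤ ‖a‖ := ρ.le_of_isAccretive (.norm_smul_one_sub a)

theorem abs_map_le_norm (a : A) : |ρ a| ≤ ‖a‖ :=
  abs_le'.2 ⟨ρ.map_le_norm a, map_neg ρ a ▸ norm_neg a ▸ ρ.map_le_norm (-a)⟩

theorem continuous : Continuous ρ :=
  AddMonoidHomClass.continuous_of_bound ρ 1 fun a ↦ by
    rw [one_mul]; exact ρ.abs_map_le_norm a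

-- `0 ≤ ρ ((s • a + b)* (s • a + b))` is affine in `s` once `ρ (a* a) = 0`.
theorem map_star_mul_eq_zero {a : A} (ha : ρ (star a * a) = 0) (b : A) : ρ (star a * b) = 0 := by
  have affine (s : ℝ) : s * (-2 * ρ (star a * b)) ≤ ρ (star b * b) := by
    have hexpand : star (s • a + b) * (s • a + b) = (s * s) • (star a * a) +
        s • (star a * b) + s • star (star a * b) + star b * b := by
      rw [star_add, star_smul, star_trivial, star_mul, star_star]
      simp only [add_mul, mul_add, smul_mul_assoc, mul_smul_comm, smul_add, smul_smul]
      abel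
    have h := ρ.map_star_mul_self_nonneg (s • a + b)
    simp only [hexpand, map_add, map_smul, ρ.map_star, ha, smul_eq_mul] at h
    linarith
  linarith [nonpos_of_forall_mul_le fun s _ ↦ affine s,
    nonpos_of_forall_mul_le fun s _ ↦ (neg_mul_comm s _).symm.trans_le (affine (-s))]

/-- The normalization of a real functional that is nonnegative on accretive elements. -/
def ofNonneg (f : A →ₗ[ℝ] ℝ) (hf : ∀ a, IsAccretive a → 0 ≤ f a) (hone : 0 < f 1) :
    RealState A where
  toLinearMap := (f 1)⁻¹ • f
  map_one' := inv_mul_cancel₀ hone.ne'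
  map_star' a := by
    have h₁ := hf _ (isAccretive_sub_star a)
    have h₂ := hf _ (isAccretive_sub_star (star a))
    rw [star_star] at h₂
    rw [map_sub] at h₁ h₂
    exact congrArg ((f 1)⁻¹ * ·) (by linarith)
  map_star_mul_self_nonneg' a :=
    mul_nonneg (inv_nonneg.2 hone.le) (hf _ (isAccretive_star_mul_self a))

end RealState

/-- The elements of a C*-algebra whose real part is bounded above by a number smaller than `ε`. -/
def reLt (A : Type*) [CStarAlgebra A] (ε : ℝ) : Set A := {a | ∃ δ < ε, IsAccretive (δ • 1 - a)}

variable {A : Type*} [CStarAlgebra A]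

theorem convex_reLt (ε : ℝ) : Convex ℝ (reLt A ε) := by
  rintro a ⟨δ, hδ, ha⟩ b ⟨δ', hδ', hb⟩ s t hs ht hst
  refine ⟨s • δ + t • δ', convex_Iio ε hδ hδ' hs ht hst, ?_⟩
  have hsplit : (s • δ + t • δ') • (1 : A) - (s • a + t • b) =
      s • (δ • 1 - a) + t • (δ' • 1 - b) := by
    rw [smul_sub, smul_sub, add_smul, smul_assoc, smul_assoc]; abel
  rw [hsplit]
  exact (ha.smul hs).add (hb.smul ht)

theorem isOpen_reLt (ε : ℝ) : IsOpen (reLt A ε) := by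
  refine Metric.isOpen_iff.2 ?_
  rintro a ⟨δ, hδ, ha⟩
  refine ⟨ε - δ, sub_pos.2 hδ, fun b hb ↦ ⟨δ + ‖b - a‖, ?_, ?_⟩⟩
  · rw [Metric.mem_ball, dist_eq_norm] at hb
    linarith
  · have hsplit : (δ + ‖b - a‖) • (1 : A) - b = (δ • 1 - a) + (‖b - a‖ • 1 - (b - a)) := by
      rw [add_smul]; abel
    rw [hsplit]
    exact ha.add (.norm_smul_one_sub _)

theorem exists_realState_forall_le {C : Set A} (hC : Convex ℝ C) (hne : C.Nonempty) {ε : ℝ}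
    (hdisj : Disjoint (reLt A ε) C) : ∃ ρ : RealState A, ∀ a ∈ C, ε ≤ ρ a := by
  obtain ⟨f, v, hlt, hge⟩ := geometric_hahn_banach_open (convex_reLt ε) (isOpen_reLt ε) hC hdisj
  have hbound {a : A} (ha : IsAccretive a) {δ : ℝ} (hδ : δ < ε) {s : ℝ} (hs : 0 ≤ s) :
      δ * f 1 - s * f a < v := by
    have hmem : δ • 1 - s • a ∈ reLt A ε := ⟨δ, hδ, by rw [sub_sub_cancel]; exact ha.smul hs⟩
    simpa only [map_sub, map_smul, smul_eq_mul] using hlt _ hmem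
  have hnonneg (a : A) (ha : IsAccretive a) : 0 ≤ f a := by
    refine neg_nonpos.1 (nonpos_of_forall_mul_le (c := v - (ε - 1) * f 1) fun s hs ↦ ?_)
    linarith [hbound ha (sub_one_lt ε) hs]
  have hone : 0 < f 1 := by
    refine (hnonneg 1 isAccretive_one).lt_of_ne' fun h₀ ↦ ?_
    obtain ⟨a, ha⟩ := hne
    have hv := hbound isAccretive_one (sub_one_lt ε) le_rfl
    have hfa := hnonneg _ (.norm_smul_one_sub a)
    rw [map_sub, map_smul, h₀, smul_zero] at hfa
    rw [h₀] at hv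
    linarith [hge a ha]
  have hε : ε * f 1 ≤ v := by
    refine (le_div_iff₀ hone).1 (le_of_forall_lt fun δ hδ ↦ (lt_div_iff₀ hone).2 ?_)
    simpa using hbound isAccretive_one hδ le_rfl
  refine ⟨.ofNonneg f hnonneg hone, fun a ha ↦ ?_⟩
  change ε ≤ (f 1)⁻¹ * f a
  rw [inv_mul_eq_div, le_div_iff₀ hone]
  exact hε.trans (hge a ha)

end RealState

section SimpleSubalgebra

theorem exists_conj_add_star_eq_neg {A : Type*} [CStarAlgebra A] (a : A) :
    ∃ p c : A, star p * (a + star a) * p = -(star c * c) ∧ (c = 0 → IsAccretive a) := by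
  let := CStarAlgebra.spectralOrder A
  let := CStarAlgebra.spectralOrderedRing A
  have hsa : IsSelfAdjoint (a + star a) := .add_star_self a
  have hp : star (a + star a)⁻ = (a + star a)⁻ := (CFC.negPart_nonneg _).isSelfAdjoint
  obtain ⟨q, hq⟩ := CStarAlgebra.nonneg_iff_eq_star_mul_self.1 (CFC.negPart_nonneg (a + star a))
  have hmul : (a + star a)⁻ * (a + star a) = -((a + star a)⁻ * (a + star a)⁻) := by
    conv_lhs => enter [2]; rw [← CFC.posPart_sub_negPart _ hsa]
    rw [mul_sub, CFC.negPart_mul_posPart, zero_sub]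
  refine ⟨(a + star a)⁻, q * (a + star a)⁻, ?_, fun hc ↦ ?_⟩
  · rw [hp, hmul, star_mul, hp, mul_assoc, ← mul_assoc (star q), ← hq]
    simp only [neg_mul, mul_assoc]
  · rw [isAccretive_iff_nonneg, ← CFC.negPart_eq_zero_iff _ hsa,
      ← CStarRing.star_mul_self_eq_zero_iff, hp]
    nth_rw 1 [hq]
    rw [mul_assoc, hc, mul_zero]

variable {B : Type*} [CStarAlgebra B]

namespace RealState

/-- The subspace of `X : B` with `ω (b* X T) = 0` for all `b` in the subalgebra `A` and all `T`
in `B`. Its intersection with `A` is a closed two-sided ideal of `A`. -/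
def nullSubmodule (ω : RealState B) (A : StarSubalgebra ℂ B) : Submodule ℝ B where
  carrier := {X | ∀ b ∈ A, ∀ T, ω (star b * X * T) = 0}
  zero_mem' b _ T := by rw [mul_zero, zero_mul, map_zero]
  add_mem' hX hY b hb T := by rw [mul_add, add_mul, map_add, hX b hb, hY b hb, add_zero]
  smul_mem' c X hX b hb T := by
    rw [mul_smul_comm, smul_mul_assoc, map_smul, hX b hb, smul_zero]

variable (ω : RealState B) {A : StarSubalgebra ℂ B}

theorem mul_mem_nullSubmodule {a X : B} (ha : a ∈ A) (hX : X ∈ ω.nullSubmodule A) :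
    a * X ∈ ω.nullSubmodule A := fun b hb T ↦ by
  simpa only [star_mul, star_star, mul_assoc] using hX (star a * b) (mul_mem (star_mem ha) hb) T

theorem nullSubmodule_mul_mem {X : B} (hX : X ∈ ω.nullSubmodule A) (T : B) :
    X * T ∈ ω.nullSubmodule A := fun b hb S ↦ by
  simpa only [mul_assoc] using hX b hb (T * S)

variable (A) in
theorem isClosed_nullSubmodule : IsClosed (ω.nullSubmodule A : Set B) := by
  have hset : (ω.nullSubmodule A : Set B) = ⋂ b ∈ A, ⋂ T, {X | ω (star b * X * T) = 0} := by
    ext X; simp [nullSubmodule]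
  rw [hset]
  exact isClosed_biInter fun b _ ↦ isClosed_iInter fun T ↦
    isClosed_eq (ω.continuous.comp (by fun_prop)) continuous_const

theorem eq_zero_of_mem_nullSubmodule
    (hA : ∀ I : TwoSidedIdeal A, IsClosed (I : Set A) → I = ⊥ ∨ I = ⊤)
    {a : A} (ha : (a : B) ∈ ω.nullSubmodule A) : a = 0 := by
  let I : TwoSidedIdeal A := .mk' {x | (x : B) ∈ ω.nullSubmodule A} (ω.nullSubmodule A).zero_mem
    (fun hx hy ↦ (ω.nullSubmodule A).add_mem hx hy) (fun hx ↦ (ω.nullSubmodule A).neg_mem hx)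
    (fun {x _} hy ↦ ω.mul_mem_nullSubmodule x.2 hy) (fun {_ y} hx ↦ ω.nullSubmodule_mul_mem hx y)
  have hmem (x : A) : x ∈ I ↔ (x : B) ∈ ω.nullSubmodule A := TwoSidedIdeal.mem_mk' ..
  have hclosed : IsClosed (I : Set A) := by
    have hset : (I : Set A) = (↑) ⁻¹' (ω.nullSubmodule A : Set B) := Set.ext hmem
    exact hset ▸ (ω.isClosed_nullSubmodule A).preimage continuous_subtype_val
  have hne : I ≠ ⊤ := fun htop ↦ one_ne_zero (α := ℝ) <| by
    have h := (hmem 1).1 (htop ▸ trivial) 1 (one_mem A) 1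
    rwa [OneMemClass.coe_one, star_one, mul_one, mul_one, ω.map_one] at h
  exact (TwoSidedIdeal.mem_bot _).1 ((hA I hclosed).resolve_right hne ▸ (hmem a).2 ha)

variable [IsClosed (A : Set B)]

theorem isAccretive_of_forall_conj_nonneg
    (hA : ∀ I : TwoSidedIdeal A, IsClosed (I : Set A) → I = ⊥ ∨ I = ⊤)
    {a : A} (ha : ∀ b : A, 0 ≤ ω (star b * a * b : A)) : IsAccretive a := by
  obtain ⟨p, c, hpc, hc⟩ := exists_conj_add_star_eq_neg a
  have hnull (b : A) : ω (star (c * b) * (c * b) : A) = 0 := by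
    have hconj : star (c * b) * (c * b) =
        -(star (p * b) * a * (p * b) + star (star (p * b) * a * (p * b))) := by
      calc star (c * b) * (c * b) = star b * (star c * c) * b := by
            simp only [star_mul, mul_assoc]
        _ = -(star b * (star p * (a + star a) * p) * b) := by
            rw [hpc, mul_neg, neg_mul, neg_neg]
        _ = _ := by simp only [star_mul, star_star, mul_add, add_mul, mul_assoc]
    refine le_antisymm ?_ (ω.map_star_mul_self_nonneg ((c * b : A) : B))
    rw [hconj, NegMemClass.coe_neg, AddMemClass.coe_add, map_neg, map_add, StarMemClass.coe_star,
      ω.map_star]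
    linarith [ha (p * b)]
  refine hc (star_eq_zero.1 (ω.eq_zero_of_mem_nullSubmodule hA fun b hb T ↦ ?_))
  have h := ω.map_star_mul_eq_zero (hnull ⟨b, hb⟩) T
  rwa [MulMemClass.coe_mul, star_mul] at h

theorem isAccretive_of_sub_mem_nullSubmodule
    (hA : ∀ I : TwoSidedIdeal A, IsClosed (I : Set A) → I = ⊥ ∨ I = ⊤) {a : A} {X : B}
    (haX : (a : B) - X ∈ ω.nullSubmodule A) (hX : IsAccretive X) : IsAccretive a :=
  ω.isAccretive_of_forall_conj_nonneg hA fun b ↦ by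
    have h := ω.nonneg_of_isAccretive (hX.conj (b : B))
    have hsplit : star (b : B) * a * b = star (b : B) * X * b + star (b : B) * (a - X) * b := by
      rw [← add_mul, ← mul_add, add_sub_cancel]
    change 0 ≤ ω (star (b : B) * a * b)
    rwa [hsplit, map_add, haX b b.2 b, add_zero]

theorem exists_extension_vanishing_nullSubmodule
    (hA : ∀ I : TwoSidedIdeal A, IsClosed (I : Set A) → I = ⊥ ∨ I = ⊤) (σ : RealState A) :
    ∃ ψ : RealState B, (∀ a : A, ψ a = σ a) ∧ ∀ X ∈ ω.nullSubmodule A, ψ X = 0 := by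
  let ker : Submodule ℝ B :=
    (LinearMap.ker σ.toLinearMap).map (A.subtype.toLinearMap.restrictScalars ℝ)
  have hdisj : Disjoint (reLt B 0) (ker ⊔ ω.nullSubmodule A : Submodule ℝ B) := by
    refine Set.disjoint_left.2 ?_
    rintro _ ⟨δ, hδ, hacc⟩ hmem
    obtain ⟨_, ⟨a, ha, rfl⟩, X, hX, rfl⟩ := Submodule.mem_sup.1 hmem
    have hdiff : ((δ • 1 - a : A) : B) - (δ • 1 - (a + X)) = X :=
      (sub_sub_sub_cancel_left _ _ _).trans (add_sub_cancel_left _ _)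
    have h := σ.nonneg_of_isAccretive
      (ω.isAccretive_of_sub_mem_nullSubmodule hA (hdiff.symm ▸ hX) hacc)
    rw [map_sub, map_smul, σ.map_one, smul_eq_mul, mul_one] at h
    have : σ a = 0 := ha
    linarith
  obtain ⟨ψ, hψ⟩ := exists_realState_forall_le (Submodule.convex _) ⟨0, zero_mem _⟩ hdisj
  have hzero (X : B) (hX : X ∈ ker ⊔ ω.nullSubmodule A) : ψ X = 0 :=
    le_antisymm (neg_nonneg.1 (map_neg ψ X ▸ hψ (-X) (neg_mem hX))) (hψ X hX)
  refine ⟨ψ, fun a ↦ ?_, fun X hX ↦ hzero X (Submodule.mem_sup_right hX)⟩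
  have hker : a - σ a • 1 ∈ LinearMap.ker σ.toLinearMap := by
    change σ (a - σ a • 1) = 0
    rw [map_sub, map_smul, σ.map_one, smul_eq_mul, mul_one, sub_self]
  have h : ψ (a - σ a • 1) = 0 :=
    hzero _ (Submodule.mem_sup_left (Submodule.mem_map_of_mem hker))
  rwa [map_sub, map_smul, ψ.map_one, smul_eq_mul, mul_one, sub_eq_zero] at h

end RealState

end SimpleSubalgebra

section BoundaryAlgebra

namespace Mean

/-- The subgroup of elements whose translation fixes the mean `m`. -/
def stabilizer (m : Mean G) : Subgroup G where
  carrier := {s | ∀ F, m (leftTranslate s F) = m F}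
  one_mem' F := by rw [leftTranslate_one]
  mul_mem' hs ht F := by rw [← leftTranslate_leftTranslate, ht, hs]
  inv_mem' {s} hs F := by rw [← hs, leftTranslate_leftTranslate, inv_mul_cancel, leftTranslate_one]

theorem mem_stabilizer {m : Mean G} {s : G} :
    s ∈ m.stabilizer ↔ ∀ F, m (leftTranslate s F) = m F := Iff.rfl

/-- The bounded functions `f` for which every mean `ν` with `ν * m = m` treats multiplication by
`f (g * ·)` as the scalar `f g`. It plays the role of the algebra of continuous functions on the
orbit closure of a boundary point `m`. -/
def boundaryAlgebra (m : Mean G) : Subalgebra ℝ ℓ^∞(G, ℝ) where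
  carrier := {f | ∀ ν : Mean G, ν * m = m → ∀ g h, ν (h * leftTranslate g f) = f g * ν h}
  mul_mem' {f f'} hf hf' ν hν g h := by
    rw [map_mul (leftTranslate g), ← mul_assoc, hf' ν hν, hf ν hν, ← mul_assoc, mul_comm (f' g)]
    rfl
  add_mem' {f f'} hf hf' ν hν g h := by
    rw [map_add, mul_add, map_add, hf ν hν, hf' ν hν, ← add_mul]
    rfl
  algebraMap_mem' c ν _ g h := by
    rw [AlgHom.commutes, mul_comm, ← Algebra.smul_def, map_smul, smul_eq_mul]
    rfl

variable {m : Mean G}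

theorem map_mul_leftTranslate {f : ℓ^∞(G, ℝ)} (hf : f ∈ m.boundaryAlgebra) {ν : Mean G}
    (hν : ν * m = m) (g : G) (h : ℓ^∞(G, ℝ)) : ν (h * leftTranslate g f) = f g * ν h :=
  hf ν hν g h

theorem leftTranslate_mem_boundaryAlgebra {f : ℓ^∞(G, ℝ)} (hf : f ∈ m.boundaryAlgebra) (k : G) :
    leftTranslate k f ∈ m.boundaryAlgebra := fun ν hν g h ↦ by
  rw [leftTranslate_leftTranslate, map_mul_leftTranslate hf hν, leftTranslate_apply]

end Mean

namespace IsExtremeInMinimalIdeal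

variable {K : Set (Mean G)} {m : Mean G}

theorem poisson_mem_boundaryAlgebra (hm : IsExtremeInMinimalIdeal K m) (F : ℓ^∞(G, ℝ)) :
    m.poisson F ∈ m.boundaryAlgebra := fun ν hν g h ↦ by
  rw [Mean.leftTranslate_poisson, hm.map_mul_poisson hν, Mean.poisson_apply]

theorem exists_ne_zero_of_conj_notMem_stabilizer (hm : IsExtremeInMinimalIdeal K m) {t g₁ : G}
    (hs : g₁⁻¹ * t * g₁ ∉ m.stabilizer) :
    ∃ v ∈ m.boundaryAlgebra, v g₁ ≠ 0 ∧ ∀ g, g⁻¹ * t * g ∈ m.stabilizer → v g = 0 := by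
  obtain ⟨F, hF⟩ := not_forall.1 (Mean.mem_stabilizer.not.1 hs)
  let u := m.poisson (leftTranslate g₁⁻¹ F)
  have hu : u ∈ m.boundaryAlgebra := hm.poisson_mem_boundaryAlgebra _
  have hdiff (g : G) : (leftTranslate t u - u) g =
      m (leftTranslate (g⁻¹ * t * g) (leftTranslate (g₁⁻¹ * g) F)) -
        m (leftTranslate (g₁⁻¹ * g) F) := by
    change m (leftTranslate (t * g) (leftTranslate g₁⁻¹ F)) -
      m (leftTranslate g (leftTranslate g₁⁻¹ F)) = _
    simp only [leftTranslate_leftTranslate, mul_assoc, mul_inv_cancel_left]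
  refine ⟨leftTranslate t u - u, sub_mem (Mean.leftTranslate_mem_boundaryAlgebra hu t) hu, ?_,
    fun g hg ↦ ?_⟩
  · rw [hdiff, inv_mul_cancel, leftTranslate_one]
    exact sub_ne_zero.2 hF
  · rw [hdiff, hg, sub_self]

theorem exists_support_conj_mem_stabilizer (hm : IsExtremeInMinimalIdeal K m) (T : Finset G)
    {f : ℓ^∞(G, ℝ)} (hf : f ∈ m.boundaryAlgebra) (hne : ∃ g, f g ≠ 0)
    (hT : ∀ g, f g ≠ 0 → ∃ t ∈ T, g⁻¹ * t * g ∈ m.stabilizer) :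
    ∃ f' ∈ m.boundaryAlgebra, (∃ g, f' g ≠ 0) ∧
      ∃ t ∈ T, ∀ g, f' g ≠ 0 → g⁻¹ * t * g ∈ m.stabilizer := by
  classical
  induction T using Finset.induction_on generalizing f with
  | empty =>
    obtain ⟨g, hg⟩ := hne
    obtain ⟨t, ht, -⟩ := hT g hg
    exact absurd ht (Finset.notMem_empty t)
  | insert t₀ T _ ih =>
    by_cases hall : ∀ g, f g ≠ 0 → g⁻¹ * t₀ * g ∈ m.stabilizer
    · exact ⟨f, hf, hne, t₀, Finset.mem_insert_self _ _, hall⟩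
    push Not at hall
    obtain ⟨g₁, hg₁, hs⟩ := hall
    obtain ⟨v, hvmem, hvg₁, hv⟩ := hm.exists_ne_zero_of_conj_notMem_stabilizer hs
    obtain ⟨f', hf', hne', t, ht, hft⟩ :=
      ih (Subalgebra.mul_mem _ hf hvmem) ⟨g₁, mul_ne_zero hg₁ hvg₁⟩ fun g hg ↦ by
        obtain ⟨t, ht, hst⟩ := hT g (left_ne_zero_of_mul hg)
        refine ⟨t, (Finset.mem_insert.1 ht).resolve_left ?_, hst⟩
        rintro rfl
        exact right_ne_zero_of_mul hg (hv g hst)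
    exact ⟨f', hf', hne', t, Finset.mem_insert_of_mem ht, hft⟩

end IsExtremeInMinimalIdeal

end BoundaryAlgebra

section CovariantRep

theorem inv_mul_mul_eq_one_iff {g s : G} : g⁻¹ * s * g = 1 ↔ s = 1 := by
  simpa only [inv_inv] using conj_eq_one_iff (a := g⁻¹)

/-- A covariant representation of `(ℓ^∞(G), G)` in a C*-algebra `B`, where `G` acts on
`ℓ^∞(G)` by left translation. -/
structure CovariantRep (G B : Type*) [Group G] [CStarAlgebra B] where
  u : G →* unitary B
  diag : ℓ^∞(G, ℝ) →ₐ[ℝ] B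
  star_diag : ∀ F, star (diag F) = diag F
  u_inv_mul_diag : ∀ g F, (u g⁻¹ : B) * diag F = diag (leftTranslate g F) * u g⁻¹

namespace CovariantRep

variable {B : Type*} [CStarAlgebra B] (π : CovariantRep G B)

theorem star_u (g : G) : star (π.u g : B) = π.u g⁻¹ := by
  rw [map_inv, ← Unitary.star_eq_inv, Unitary.coe_star]

theorem u_mul_u (g h : G) : (π.u g * π.u h : B) = π.u (g * h) := by
  rw [map_mul, Submonoid.coe_mul]

theorem u_one : (π.u 1 : B) = 1 := by
  rw [map_one, OneMemClass.coe_one]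

theorem u_inv_mul_u (g : G) : (π.u g⁻¹ * π.u g : B) = 1 := by
  rw [u_mul_u, inv_mul_cancel, u_one]

theorem u_inv_mul_diag_mul_u (g : G) (F : ℓ^∞(G, ℝ)) :
    (π.u g⁻¹ * π.diag F * π.u g : B) = π.diag (leftTranslate g F) := by
  rw [u_inv_mul_diag, mul_assoc, u_inv_mul_u, mul_one]

theorem diag_mul_u (s : G) (F : ℓ^∞(G, ℝ)) :
    (π.diag F * π.u s : B) = π.u s * π.diag (leftTranslate s F) := by
  simpa [leftTranslate_leftTranslate, leftTranslate_one] using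
    (π.u_inv_mul_diag s⁻¹ (leftTranslate s F)).symm

theorem u_inv_mul_diag_mul_one_sub_u (g t : G) (F : ℓ^∞(G, ℝ)) :
    (π.u g⁻¹ * (π.diag F * (1 - π.u t)) : B) =
      π.diag (leftTranslate g F) * ((1 - π.u (g⁻¹ * t * g)) * π.u g⁻¹) := by
  rw [← mul_assoc, u_inv_mul_diag, mul_assoc, mul_sub, sub_mul, mul_one, one_mul, u_mul_u, u_mul_u,
    mul_inv_cancel_right]

theorem norm_u_inv_mul_mul_u (g : G) (T : B) : ‖(π.u g⁻¹ * T * π.u g : B)‖ = ‖T‖ := by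
  rw [CStarRing.norm_mul_coe_unitary, CStarRing.norm_coe_unitary_mul]

theorem diag_eq_star_mul_self {F : ℓ^∞(G, ℝ)} (hF : ∀ g, 0 ≤ F g) :
    ∃ H, π.diag F = star (π.diag H) * π.diag H := by
  refine ⟨boundedFun (fun g ↦ √(F g)) √‖F‖ fun g ↦ ?_, ?_⟩
  · rw [abs_of_nonneg (Real.sqrt_nonneg _)]
    exact Real.sqrt_le_sqrt ((le_abs_self _).trans (abs_apply_le_norm F g))
  · rw [star_diag, ← map_mul]
    congr 1
    ext g
    exact (Real.mul_self_sqrt (hF g)).symm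

/-- The mean obtained by restricting a state to the diagonal copy of `ℓ^∞(G)`. -/
def diagMean (ρ : RealState B) : Mean G :=
  .ofPositive (ρ.toLinearMap ∘ₗ π.diag.toLinearMap)
    ((congrArg ρ (map_one π.diag)).trans ρ.map_one) fun F hF ↦ by
      obtain ⟨H, hH⟩ := π.diag_eq_star_mul_self hF
      exact (ρ.map_star_mul_self_nonneg (π.diag H)).trans_eq (congrArg ρ hH.symm)

theorem diagMean_apply (ρ : RealState B) (F : ℓ^∞(G, ℝ)) : π.diagMean ρ F = ρ (π.diag F) := rfl

/-- The function `g ↦ ρ (u_g⁻¹ T u_g)`. -/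
def orbitFun (ρ : RealState B) (T : B) : ℓ^∞(G, ℝ) :=
  boundedFun (fun g ↦ ρ (π.u g⁻¹ * T * π.u g)) ‖T‖ fun g ↦
    (ρ.abs_map_le_norm _).trans_eq (π.norm_u_inv_mul_mul_u g T)

theorem orbitFun_apply (ρ : RealState B) (T : B) (g : G) :
    π.orbitFun ρ T g = ρ (π.u g⁻¹ * T * π.u g) := rfl

theorem orbitFun_diag (ρ : RealState B) (F : ℓ^∞(G, ℝ)) :
    π.orbitFun ρ (π.diag F) = (π.diagMean ρ).poisson F := by
  ext g
  rw [orbitFun_apply, u_inv_mul_diag_mul_u, Mean.poisson_apply, diagMean_apply]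

/-- The average of the conjugates of a state with respect to a mean on the group. -/
def average (μ : Mean G) (ρ : RealState B) : RealState B where
  toFun T := μ (π.orbitFun ρ T)
  map_add' S T := by
    rw [← map_add]
    congr 1
    ext g
    change ρ _ = ρ _ + ρ _
    rw [mul_add, add_mul, map_add]
  map_smul' c T := by
    rw [RingHom.id_apply, ← map_smul]
    congr 1
    ext g
    change ρ _ = c • ρ _
    rw [mul_smul_comm, smul_mul_assoc, map_smul]
  map_one' := by
    have : π.orbitFun ρ 1 = 1 := by
      ext g
      rw [orbitFun_apply, mul_one, u_inv_mul_u, ρ.map_one]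
      rfl
    rw [this, μ.map_one]
  map_star' T := by
    congr 1
    ext g
    rw [orbitFun_apply, orbitFun_apply, ← ρ.map_star, star_mul, star_mul, star_star, star_u,
      star_u, inv_inv, mul_assoc]
  map_star_mul_self_nonneg' T := μ.map_nonneg fun g ↦ by
    have h := ρ.map_star_mul_self_nonneg (T * π.u g)
    rwa [star_mul, star_u, mul_assoc, ← mul_assoc (star T), ← mul_assoc] at h

theorem average_eq_zero (μ : Mean G) {ρ : RealState B} {T : B}
    (h : ∀ g, ρ (π.u g⁻¹ * T * π.u g) = 0) : π.average μ ρ T = 0 := by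
  have : π.orbitFun ρ T = 0 := by
    ext g
    exact h g
  exact (congrArg μ this).trans (map_zero μ)

theorem le_average (μ : Mean G) {ρ : RealState B} {T : B} {c : ℝ}
    (h : ∀ g, c ≤ ρ (π.u g⁻¹ * T * π.u g)) : c ≤ π.average μ ρ T :=
  μ.le_map h

theorem diagMean_average (μ : Mean G) (ρ : RealState B) :
    π.diagMean (π.average μ ρ) = μ * π.diagMean ρ :=
  DFunLike.ext _ _ fun F ↦ congrArg μ (π.orbitFun_diag ρ F)

variable {K : Set (Mean G)} {m : Mean G}

theorem exists_diagMean_average_mul_eq (hm : IsExtremeInMinimalIdeal K m) (ρ : RealState B) :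
    ∃ μ, π.diagMean (π.average μ ρ) * m = m := by
  simpa only [diagMean_average] using hm.exists_mul_mul_eq (π.diagMean ρ)

section Multiplicative

variable {π} {ρ : RealState B} (hρ : π.diagMean ρ * m = m)
include hρ

theorem map_diag_leftTranslate_mul {f : ℓ^∞(G, ℝ)} (hf : f ∈ m.boundaryAlgebra) (g : G) (T : B) :
    ρ (π.diag (leftTranslate g f) * T) = f g * ρ T := by
  let d := leftTranslate g f - f g • 1
  have hd : ρ (star (π.diag d) * π.diag d) = 0 := by
    have hdd : d * d = d * leftTranslate g f - f g • d := by
      rw [← mul_one (f g • d), smul_mul_assoc, ← mul_smul_comm, ← mul_sub]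
    rw [star_diag, ← map_mul, hdd, ← diagMean_apply, map_sub,
      Mean.map_mul_leftTranslate hf hρ, map_smul, smul_eq_mul, sub_self]
  have h := ρ.map_star_mul_eq_zero hd T
  rwa [star_diag, map_sub, map_smul, map_one, sub_mul, smul_mul_assoc, one_mul, map_sub, map_smul,
    smul_eq_mul, sub_eq_zero] at h

theorem map_mul_diag_leftTranslate {f : ℓ^∞(G, ℝ)} (hf : f ∈ m.boundaryAlgebra) (g : G) (T : B) :
    ρ (T * π.diag (leftTranslate g f)) = f g * ρ T := by
  rw [← ρ.map_star, star_mul, star_diag, map_diag_leftTranslate_mul hρ hf, ρ.map_star]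

-- Moving `diag (m.poisson F)` across `u s` changes its value `m F` to `m (F (s * ·))`.
theorem map_smul_u_eq_zero (hm : IsExtremeInMinimalIdeal K m) {s : G} (hs : s ∉ m.stabilizer)
    (c : ℂ) : ρ (c • (π.u s : B)) = 0 := by
  obtain ⟨F, hF⟩ := not_forall.1 (Mean.mem_stabilizer.not.1 hs)
  have hmem := hm.poisson_mem_boundaryAlgebra F
  have hleft := map_diag_leftTranslate_mul hρ hmem 1 (c • (π.u s : B))
  have hright := map_mul_diag_leftTranslate hρ hmem s (c • (π.u s : B))
  rw [leftTranslate_one, mul_smul_comm, diag_mul_u, ← smul_mul_assoc, hright] at hleft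
  simp only [Mean.poisson_apply, leftTranslate_one] at hleft
  by_contra hne
  exact hF (mul_right_cancel₀ hne hleft)

end Multiplicative

theorem map_u_mul {ω : RealState B} {s : G} (hs : ω (π.u s) = 1) (T : B) :
    ω (π.u s * T) = ω T := by
  have hd : ω (star (star (π.u s : B) - 1) * (star (π.u s : B) - 1)) = 0 := by
    rw [star_sub, star_star, star_one, sub_mul, mul_sub, mul_sub, one_mul, one_mul, mul_one,
      Unitary.mul_star_self_of_mem (π.u s).2, map_sub, map_sub, map_sub, ω.map_star, ω.map_one, hs]
    ring
  have h := ω.map_star_mul_eq_zero hd T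
  rwa [star_sub, star_star, star_one, sub_mul, one_mul, map_sub, sub_eq_zero] at h

variable {A : StarSubalgebra ℂ B} {ω : RealState B}

theorem diag_mul_one_sub_u_mem_nullSubmodule
    (hA : (A : Set B) ⊆ closure (Submodule.span ℂ (Set.range fun g ↦ (π.u g : B))))
    (hω : π.diagMean ω * m = m) (hωu : ∀ s ∈ m.stabilizer, ω (π.u s) = 1)
    {f : ℓ^∞(G, ℝ)} (hf : f ∈ m.boundaryAlgebra) {t : G}
    (hft : ∀ g, f g ≠ 0 → g⁻¹ * t * g ∈ m.stabilizer) :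
    π.diag f * (1 - π.u t) ∈ ω.nullSubmodule A := by
  have hgen (g : G) (T : B) : ω (star (π.u g : B) * (π.diag f * (1 - π.u t)) * T) = 0 := by
    rw [star_u, u_inv_mul_diag_mul_one_sub_u, mul_assoc, mul_assoc,
      map_diag_leftTranslate_mul hω hf, sub_mul, one_mul]
    by_cases hg : f g = 0
    · rw [hg, zero_mul]
    · rw [map_sub, π.map_u_mul (hωu _ (hft g hg)), sub_self, mul_zero]
  have hclosed : IsClosed {b : B | ∀ T, ω (star b * (π.diag f * (1 - π.u t)) * T) = 0} := by
    simp only [Set.ofPred_forall]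
    exact isClosed_iInter fun T ↦ isClosed_eq (ω.continuous.comp (by fun_prop)) continuous_const
  refine fun b hb ↦ closure_minimal (fun b hb ↦ ?_) hclosed (hA hb)
  induction hb using Submodule.span_induction with
  | mem _ hb => obtain ⟨g, rfl⟩ := hb; exact hgen g
  | zero => simp
  | add b c _ _ hb hc => intro T; rw [star_add, add_mul, add_mul, map_add, hb, hc, add_zero]
  | smul z b _ hb =>
    intro T
    rw [star_smul, smul_mul_assoc, smul_mul_assoc, ← mul_smul_comm, hb]

theorem exists_forall_conj_notMem_stabilizer (hm : IsExtremeInMinimalIdeal K m)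
    (hA : (A : Set B) ⊆ closure (Submodule.span ℂ (Set.range fun g ↦ (π.u g : B))))
    (huA : ∀ g, (π.u g : B) ∈ A)
    (hω : π.diagMean ω * m = m) (hωu : ∀ s ∈ m.stabilizer, ω (π.u s) = 1)
    {ψ : RealState B} (hψu : ∀ s ≠ 1, ψ (π.u s) = 0) (hψ : ∀ X ∈ ω.nullSubmodule A, ψ X = 0)
    {T : Finset G} (hT : 1 ∉ T) : ∃ g, ∀ t ∈ T, g⁻¹ * t * g ∉ m.stabilizer := by
  by_contra! hcon
  obtain ⟨f, hf, ⟨g, hg⟩, t, ht, hft⟩ := hm.exists_support_conj_mem_stabilizer T (one_mem _)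
    ⟨1, one_ne_zero⟩ fun g _ ↦ hcon g
  have hnull := π.diag_mul_one_sub_u_mem_nullSubmodule hA hω hωu hf hft
  obtain ⟨μ, hμ⟩ := π.exists_diagMean_average_mul_eq hm ψ
  have hzero {X : B} (hX : X ∈ ω.nullSubmodule A) : π.average μ ψ X = 0 :=
    π.average_eq_zero μ fun h ↦
      hψ _ (ω.nullSubmodule_mul_mem (ω.mul_mem_nullSubmodule (huA h⁻¹) hX) _)
  have hu {s : G} (hs : s ≠ 1) : π.average μ ψ (π.u s) = 0 :=
    π.average_eq_zero μ fun h ↦ by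
      rw [u_mul_u, u_mul_u]
      exact hψu _ (inv_mul_mul_eq_one_iff.not.2 hs)
  have hconj := hzero (ω.nullSubmodule_mul_mem (ω.mul_mem_nullSubmodule (huA g⁻¹) hnull) (π.u g))
  have hne : g⁻¹ * t * g ≠ 1 := inv_mul_mul_eq_one_iff.not.2 (ne_of_mem_of_not_mem ht hT)
  rw [u_inv_mul_diag_mul_one_sub_u, mul_assoc, mul_assoc, u_inv_mul_u, mul_one,
    map_diag_leftTranslate_mul hμ hf, map_sub, RealState.map_one, hu hne, sub_zero,
    mul_one] at hconj
  exact hg hconj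

end CovariantRep

end CovariantRep

section RegularRepresentation

theorem lreg_apply (g : G) (ξ : ℓ²(G, ℂ)) (h : G) : lreg g ξ h = ξ (g⁻¹ * h) := by
  unfold lreg lregE
  rfl

theorem norm_lreg_apply (g : G) (ξ : ℓ²(G, ℂ)) : ‖lreg g ξ‖ = ‖ξ‖ := by
  unfold lreg
  exact (lregE g).norm_map ξ

theorem star_lreg_mul_lreg (g : G) : star (lreg g) * lreg g = 1 := by
  rw [ContinuousLinearMap.star_eq_adjoint]
  exact (ContinuousLinearMap.norm_map_iff_adjoint_comp_self _).1 (norm_lreg_apply g)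

/-- The left regular representation as a homomorphism to the unitary group. -/
def lregHom : G →* unitary (ℓ²(G, ℂ) →L[ℂ] ℓ²(G, ℂ)) :=
  have lreg_mul (g h : G) : lreg (g * h) = lreg g * lreg h := by
    ext ξ k
    simp [lreg_apply, mul_assoc]
  have lreg_one : lreg (1 : G) = 1 := by
    ext ξ k
    simp [lreg_apply]
  { toFun g := ⟨lreg g, star_lreg_mul_lreg g, by
      have hinv : lreg g * lreg g⁻¹ = 1 := by rw [← lreg_mul, mul_inv_cancel, lreg_one]
      rw [left_inv_eq_right_inv (star_lreg_mul_lreg g) hinv, hinv]⟩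
    map_one' := Subtype.ext lreg_one
    map_mul' g h := Subtype.ext (lreg_mul g h) }

theorem coe_lregHom (g : G) : (lregHom g : ℓ²(G, ℂ) →L[ℂ] ℓ²(G, ℂ)) = lreg g := rfl

variable {ι : Type*}

/-- Pointwise multiplication by a bounded real function on `ℓ²(ι)`, as a linear map. -/
def mulByBounded (F : ℓ^∞(ι, ℝ)) : ℓ²(ι, ℂ) →ₗ[ℂ] ℓ²(ι, ℂ) where
  toFun ξ := ⟨fun i ↦ F i * ξ i, ((lp.memℓp ξ).const_smul (‖F‖ : ℂ)).mono' fun i ↦ by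
    rw [norm_mul, Complex.norm_real, Pi.smul_apply, norm_smul, Complex.norm_real, norm_norm]
    gcongr
    exact abs_apply_le_norm F i⟩
  map_add' ξ η := by ext i; exact mul_add ..
  map_smul' c ξ := by ext i; exact mul_left_comm ..

theorem isSymmetric_mulByBounded (F : ℓ^∞(ι, ℝ)) : (mulByBounded F).IsSymmetric := fun ξ η ↦ by
  rw [lp.inner_eq_tsum, lp.inner_eq_tsum]
  refine tsum_congr fun i ↦ ?_
  change inner ℂ (F i * ξ i) (η i) = inner ℂ (ξ i) (F i * η i)
  simp only [RCLike.inner_apply, map_mul, Complex.conj_ofReal]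
  ring

/-- Pointwise multiplication by bounded real functions, as operators on `ℓ²(ι)`. Boundedness is
automatic for symmetric operators. -/
def mulOperator : ℓ^∞(ι, ℝ) →ₐ[ℝ] ℓ²(ι, ℂ) →L[ℂ] ℓ²(ι, ℂ) where
  toFun F := (isSymmetric_mulByBounded F).toSelfAdjoint
  map_one' := by
    ext ξ i
    change ((1 : ℝ) : ℂ) * ξ i = ξ i
    rw [Complex.ofReal_one, one_mul]
  map_mul' F H := by
    ext ξ i
    change ((F i * H i : ℝ) : ℂ) * ξ i = F i * (H i * ξ i)
    rw [Complex.ofReal_mul, mul_assoc]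
  map_zero' := by
    ext ξ i
    change ((0 : ℝ) : ℂ) * ξ i = 0
    rw [Complex.ofReal_zero, zero_mul]
  map_add' F H := by
    ext ξ i
    change ((F i + H i : ℝ) : ℂ) * ξ i = F i * ξ i + H i * ξ i
    rw [Complex.ofReal_add, add_mul]
  commutes' c := by
    ext ξ _
    rfl

theorem mulOperator_apply (F : ℓ^∞(ι, ℝ)) (ξ : ℓ²(ι, ℂ)) (i : ι) :
    mulOperator F ξ i = F i * ξ i := rfl

variable (G) in
/-- The covariant representation on `ℓ²(G)` by left translations and multiplication operators. -/
def regularRep : CovariantRep G (ℓ²(G, ℂ) →L[ℂ] ℓ²(G, ℂ)) where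
  u := lregHom
  diag := mulOperator
  star_diag F := (isSymmetric_mulByBounded F).toSelfAdjoint.2
  u_inv_mul_diag g F := by
    ext ξ h
    change lreg g⁻¹ (mulOperator F ξ) h = mulOperator (leftTranslate g F) (lreg g⁻¹ ξ) h
    rw [lreg_apply, mulOperator_apply, mulOperator_apply, lreg_apply, inv_inv,
      leftTranslate_apply]

theorem coe_uu (g : G) : (uu g : ℓ²(G, ℂ) →L[ℂ] ℓ²(G, ℂ)) = lreg g := by
  unfold uu
  rfl

theorem uu_mul (g h : G) : uu (g * h) = uu g * uu h :=
  Subtype.ext <| by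
    rw [MulMemClass.coe_mul, coe_uu, coe_uu, coe_uu, ← coe_lregHom, map_mul]
    rfl

theorem uu_one : uu (1 : G) = 1 :=
  Subtype.ext <| by
    rw [coe_uu, ← coe_lregHom, map_one]
    rfl

theorem star_uu (g : G) : star (uu g) = uu g⁻¹ :=
  Subtype.ext <| by
    rw [StarMemClass.coe_star, coe_uu, coe_uu]
    exact (regularRep G).star_u g

theorem uu_inv_mul_uu_mul_uu (g t : G) : uu g⁻¹ * uu t * uu g = uu (g⁻¹ * t * g) := by
  rw [← uu_mul, ← uu_mul]

theorem isClosed_redCstar : IsClosed (redCstar G : Set (ℓ²(G, ℂ) →L[ℂ] ℓ²(G, ℂ))) := by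
  unfold redCstar
  exact StarSubalgebra.isClosed_topologicalClosure _

theorem adjoin_range_lreg_le_span :
    Subalgebra.toSubmodule (StarAlgebra.adjoin ℂ (Set.range (lreg (G := G)))).toSubalgebra ≤
      Submodule.span ℂ (Set.range lreg) := by
  let range : Submonoid (ℓ²(G, ℂ) →L[ℂ] ℓ²(G, ℂ)) :=
    MonoidHom.mrange ((unitary _).subtype.comp lregHom)
  rw [StarAlgebra.adjoin_eq_span]
  refine Submodule.span_mono (Submonoid.closure_le (S := range) |>.2 (Set.union_subset ?_ ?_))
  · rintro _ ⟨g, rfl⟩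
    exact ⟨g, rfl⟩
  · rintro T ⟨g, hg⟩
    exact ⟨g⁻¹, by rw [← star_star T, ← hg]; exact ((regularRep G).star_u g).symm⟩

variable (G) in
theorem redCstar_subset_closure_span : (redCstar G : Set (ℓ²(G, ℂ) →L[ℂ] ℓ²(G, ℂ))) ⊆
    closure (Submodule.span ℂ (Set.range (lreg (G := G))) : Set (ℓ²(G, ℂ) →L[ℂ] ℓ²(G, ℂ))) := by
  unfold redCstar
  rw [StarSubalgebra.topologicalClosure_coe]
  exact closure_mono adjoin_range_lreg_le_span

variable (G) in
theorem dense_span_uu :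
    Dense (Submodule.span ℂ (Set.range (uu (G := G))) : Set (redCstar G)) := by
  rw [Subtype.dense_iff]
  have hspan : Submodule.span ℂ (Set.range lreg) =
      (Submodule.span ℂ (Set.range uu)).map (redCstar G).subtype.toLinearMap := by
    rw [Submodule.map_span, ← Set.range_comp]
    congr 2
    exact funext fun g ↦ (coe_uu g).symm
  exact (redCstar_subset_closure_span G).trans (hspan ▸ subset_rfl)

theorem deltaOne_eq_single [DecidableEq G] : deltaOne = (lp.single 2 1 1 : ℓ²(G, ℂ)) := by
  unfold deltaOne
  congr!

theorem inner_deltaOne (ξ : ℓ²(G, ℂ)) : inner ℂ deltaOne ξ = ξ 1 := by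
  classical
  rw [deltaOne_eq_single, lp.inner_single_left]
  simp only [RCLike.inner_apply, map_one, mul_one]

theorem lreg_deltaOne [DecidableEq G] (g : G) :
    lreg g deltaOne = (lp.single 2 g 1 : ℓ²(G, ℂ)) := by
  ext h
  rw [deltaOne_eq_single, lreg_apply, lp.single_apply, lp.single_apply, Pi.single_apply,
    Pi.single_apply]
  exact if_congr (inv_mul_eq_one.trans eq_comm) rfl rfl

theorem tau_apply (a : redCstar G) : tau G a = (a : ℓ²(G, ℂ) →L[ℂ] ℓ²(G, ℂ)) deltaOne 1 := by
  rw [← inner_deltaOne]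
  unfold tau
  rfl

theorem tau_uu [DecidableEq G] (g : G) : tau G (uu g) = if g = 1 then 1 else 0 := by
  rw [tau_apply, coe_uu, lreg_deltaOne, lp.single_apply, Pi.single_apply]
  exact if_congr eq_comm rfl rfl

theorem tau_one : tau G 1 = 1 := by
  classical rw [← uu_one, tau_uu, if_pos rfl]

theorem tau_star_mul_self (a : redCstar G) :
    tau G (star a * a) = (‖(a : ℓ²(G, ℂ) →L[ℂ] ℓ²(G, ℂ)) deltaOne‖ ^ 2 : ℝ) := by
  have hstar : ((star a * a : redCstar G) : ℓ²(G, ℂ) →L[ℂ] ℓ²(G, ℂ)) deltaOne =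
      ContinuousLinearMap.adjoint (a : ℓ²(G, ℂ) →L[ℂ] ℓ²(G, ℂ))
        ((a : ℓ²(G, ℂ) →L[ℂ] ℓ²(G, ℂ)) deltaOne) := rfl
  rw [tau_apply, ← inner_deltaOne, hstar, ContinuousLinearMap.adjoint_inner_right,
    inner_self_eq_norm_sq_to_K, Complex.ofReal_pow]
  rfl

theorem dualAct_apply (g : G) (φ : WeakDual ℂ (redCstar G)) (a : redCstar G) :
    dualAct g φ a = φ (uu g⁻¹ * a * uu g) := rfl

theorem dualAct_tau (g : G) : dualAct g (tau G) = tau G := by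
  refine ContinuousLinearMap.ext_on (dense_span_uu G) ?_
  rintro _ ⟨t, rfl⟩
  change tau G (uu g⁻¹ * uu t * uu g) = tau G (uu t)
  classical rw [uu_inv_mul_uu_mul_uu, tau_uu, tau_uu, inv_mul_mul_eq_one_iff]

/-- `τ` is conjugation invariant, so `τ(a⋆a) = 0` kills not only `a δ₁` but every `a δ_g`. -/
theorem eq_zero_of_tau_star_mul_self_eq_zero {a : redCstar G} (ha : tau G (star a * a) = 0) :
    a = 0 := by
  classical
  have hlreg (g : G) : (a : ℓ²(G, ℂ) →L[ℂ] ℓ²(G, ℂ)) (lreg g deltaOne) = 0 := by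
    have hconj : star (a * uu g) * (a * uu g) = uu g⁻¹ * (star a * a) * uu g := by
      rw [star_mul, star_uu, mul_assoc, mul_assoc, mul_assoc]
    have hτ := tau_star_mul_self (a * uu g)
    rw [hconj, ← dualAct_apply, dualAct_tau, ha, eq_comm, Complex.ofReal_eq_zero, sq_eq_zero_iff,
      norm_eq_zero, MulMemClass.coe_mul, coe_uu] at hτ
    exact hτ
  refine Subtype.ext (lp.ext_continuousLinearMap (by norm_num) fun g ↦ ?_)
  ext : 1
  change (a : ℓ²(G, ℂ) →L[ℂ] ℓ²(G, ℂ)) (lp.single 2 g 1) = 0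
  rw [← lreg_deltaOne, hlreg]

end RegularRepresentation

section Reiter

variable {ι : Type*}

variable (ι) in
/-- Finitely supported probability vectors on `ι`. -/
def finiteProb : Set (ι →₀ ℝ) := {p | 0 ≤ p ∧ Finsupp.linearCombination ℝ (fun _ ↦ (1 : ℝ)) p = 1}

theorem convex_finiteProb : Convex ℝ (finiteProb ι) :=
  (convex_Ici 0).inter (convex_hyperplane (LinearMap.isLinear _) 1)

theorem single_mem_finiteProb (i : ι) : Finsupp.single i 1 ∈ finiteProb ι :=
  ⟨Finsupp.single_nonneg.2 zero_le_one, by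
    rw [Finsupp.linearCombination_single, smul_eq_mul, one_mul]⟩

theorem Mean.exists_norm_linearCombination_lt {E : Type*} [NormedAddCommGroup E] [NormedSpace ℝ E]
    (m : Mean ι) {D : ι → E}
    (hD : ∀ f : E →L[ℝ] ℝ, ∃ F : ℓ^∞(ι, ℝ), (∀ i, F i = f (D i)) ∧ m F = 0) {ε : ℝ} (hε : 0 < ε) :
    ∃ p ∈ finiteProb ι, ‖Finsupp.linearCombination ℝ D p‖ < ε := by
  suffices h0 : (0 : E) ∈ closure (Finsupp.linearCombination ℝ D '' finiteProb ι) by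
    obtain ⟨_, ⟨p, hp, rfl⟩, hlt⟩ := Metric.mem_closure_iff.1 h0 ε hε
    exact ⟨p, hp, by rwa [dist_zero_left] at hlt⟩
  by_contra h0
  obtain ⟨f, c, hc, hf⟩ := geometric_hahn_banach_point_closed
    (convex_finiteProb.linear_image _).closure isClosed_closure h0
  obtain ⟨F, hF, hmF⟩ := hD f
  have hle : c ≤ m F := m.le_map fun i ↦ by
    have hi := hf _ (subset_closure ⟨_, single_mem_finiteProb i, rfl⟩)
    rw [Finsupp.linearCombination_single, one_smul] at hi
    exact hF i ▸ hi.le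
  rw [map_zero] at hc
  exact (hc.trans_le hle).ne' hmF

/-- The displacement `δ_{sg} - δ_g` in `ℓ¹(G)` of a point mass under translation by `s`. -/
def displacement (s g : G) : ℓ¹(G, ℝ) :=
  letI := Classical.decEq G
  lp.single 1 (s * g) 1 - lp.single 1 g 1

theorem linearCombination_displacement_apply (s : G) (p : G →₀ ℝ) (h : G) :
    Finsupp.linearCombination ℝ (displacement s) p h = p (s⁻¹ * h) - p h := by
  classical
  induction p using Finsupp.induction_linear with
  | zero => simp
  | add p q hp hq =>
    rw [map_add, lp.coeFn_add, Pi.add_apply, hp, hq, Finsupp.add_apply, Finsupp.add_apply]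
    ring
  | single g a =>
    have hinv : s * g = h ↔ g = s⁻¹ * h := eq_inv_mul_iff_mul_eq.symm
    simp only [Finsupp.linearCombination_single, displacement, lp.coeFn_smul, lp.coeFn_sub,
      Pi.smul_apply, Pi.sub_apply, lp.single_apply, Pi.single_apply, Finsupp.single_apply,
      eq_comm (a := h), hinv, smul_eq_mul, mul_sub, mul_ite, mul_one, mul_zero]

theorem Mean.exists_apply_displacement {m : Mean G} {s : G} (hs : s ∈ m.stabilizer)
    (φ : ℓ¹(G, ℝ) →L[ℝ] ℝ) :
    ∃ F : ℓ^∞(G, ℝ), (∀ g, F g = φ (displacement s g)) ∧ m F = 0 := by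
  classical
  let H : ℓ^∞(G, ℝ) := boundedFun (fun g ↦ φ (lp.single 1 g 1)) ‖φ‖ fun g ↦ by
    simpa using φ.le_opNorm (lp.single 1 g 1)
  refine ⟨leftTranslate s H - H, fun g ↦ ?_, ?_⟩
  · unfold displacement
    rw [map_sub]
    congr!
  · rw [map_sub, mem_stabilizer.1 hs, sub_self]

/-- Day's trick: weak almost invariance of point masses averages to norm almost invariance. -/
theorem Mean.exists_almost_invariant (m : Mean G) (S : Finset m.stabilizer) {F : ℓ^∞(G, ℝ)}
    (hF : m F = 0) {ε : ℝ} (hε : 0 < ε) :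
    ∃ p ∈ finiteProb G, |Finsupp.linearCombination ℝ F p| < ε ∧
      ∀ s ∈ S, ‖Finsupp.linearCombination ℝ (displacement (s : G)) p‖ < ε := by
  classical
  let D (g : G) : (S → ℓ¹(G, ℝ)) × ℝ := (fun s ↦ displacement (s : G) g, F g)
  have hD (f : (S → ℓ¹(G, ℝ)) × ℝ →L[ℝ] ℝ) :
      ∃ H : ℓ^∞(G, ℝ), (∀ g, H g = f (D g)) ∧ m H = 0 := by
    let f₁ : (S → ℓ¹(G, ℝ)) →L[ℝ] ℝ := f.comp (ContinuousLinearMap.inl ℝ _ ℝ)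
    choose H hH hmH using fun s : S ↦ exists_apply_displacement s.1.2
      (f₁.comp (ContinuousLinearMap.single ℝ (fun _ ↦ ℓ¹(G, ℝ)) s))
    refine ⟨∑ s, H s + f (0, 1) • F, fun g ↦ ?_, by simp [hmH, hF]⟩
    have hsplit : D g = ((fun s : S ↦ displacement (s : G) g), 0) +
        (F g : ℝ) • ((0, 1) : (S → ℓ¹(G, ℝ)) × ℝ) := by
      simp only [D, Prod.smul_mk, smul_zero, smul_eq_mul, mul_one, Prod.mk_add_mk, add_zero,
        zero_add]
    rw [hsplit, map_add, map_smul, lp.coeFn_add, lp.coeFn_sum, lp.coeFn_smul, Pi.add_apply,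
      Finset.sum_apply, Pi.smul_apply, smul_eq_mul, smul_eq_mul, mul_comm, Finset.sum_congr rfl
        fun s _ ↦ hH s g]
    exact congrArg (· + _) (f₁.sum_comp_single ℝ _ _)
  obtain ⟨p, hp, hlt⟩ := m.exists_norm_linearCombination_lt hD hε
  have hfst (s : S) : (Finsupp.linearCombination ℝ D p).1 s =
      Finsupp.linearCombination ℝ (displacement (s : G)) p :=
    Finsupp.apply_linearCombination ℝ (LinearMap.proj s ∘ₗ LinearMap.fst ℝ _ _) D p
  have hsnd : (Finsupp.linearCombination ℝ D p).2 = Finsupp.linearCombination ℝ F p :=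
    Finsupp.apply_linearCombination ℝ (LinearMap.snd ℝ _ _) D p
  refine ⟨p, hp, ?_, fun s hs ↦ ?_⟩
  · rw [← hsnd]
    exact (norm_snd_le _).trans_lt hlt
  · rw [← hfst ⟨s, hs⟩]
    exact ((norm_le_pi_norm _ _).trans (norm_fst_le _)).trans_lt hlt

/-- The unit vector `√p` of `ℓ²(ι)` attached to a probability vector `p`. -/
def sqrtVec (p : ι →₀ ℝ) : ℓ²(ι, ℂ) :=
  ⟨fun i ↦ (√(p i) : ℂ), (memℓp_zero (p.hasFiniteSupport.subset fun i hi ↦ by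
    contrapose! hi
    simp_all)).of_exponent_ge zero_le⟩

theorem inner_sqrtVec_mulOperator {p : ι →₀ ℝ} (hp : 0 ≤ p) (F : ℓ^∞(ι, ℝ)) :
    inner ℂ (sqrtVec p) (mulOperator F (sqrtVec p)) = Finsupp.linearCombination ℝ F p := by
  rw [lp.inner_eq_tsum, Finsupp.linearCombination_apply, Finsupp.sum, Complex.ofReal_sum]
  have hterm (i : ι) : inner ℂ (sqrtVec p i) (mulOperator F (sqrtVec p) i) =
      ((p i • F i : ℝ) : ℂ) := by
    change inner ℂ (√(p i) : ℂ) (F i * √(p i)) = _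
    rw [RCLike.inner_apply, Complex.conj_ofReal, mul_assoc, ← Complex.ofReal_mul,
      Real.mul_self_sqrt (hp i), ← Complex.ofReal_mul, mul_comm]
    rfl
  rw [tsum_congr hterm]
  refine tsum_eq_sum fun i hi ↦ ?_
  rw [Finsupp.notMem_support_iff.1 hi, zero_smul, Complex.ofReal_zero]

theorem norm_sqrtVec {p : ι →₀ ℝ} (hp : p ∈ finiteProb ι) : ‖sqrtVec p‖ = 1 := by
  have h := inner_sqrtVec_mulOperator hp.1 1
  rw [map_one, one_apply_eq_self, inner_self_eq_norm_sq_to_K] at h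
  have hone : ‖sqrtVec p‖ ^ 2 = 1 := Complex.ofReal_injective
    ((Complex.ofReal_pow _ _).trans (h.trans (congrArg _ hp.2)))
  exact (pow_eq_one_iff_of_nonneg (norm_nonneg _) two_ne_zero).1 hone

theorem sqrt_sub_sqrt_sq_le {a b : ℝ} (ha : 0 ≤ a) (hb : 0 ≤ b) : (√a - √b) ^ 2 ≤ |a - b| := by
  have hle : |√a - √b| ≤ |√a + √b| := by
    rw [abs_of_nonneg (by positivity : 0 ≤ √a + √b), abs_le]
    constructor <;> linarith [Real.sqrt_nonneg a, Real.sqrt_nonneg b]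
  calc (√a - √b) ^ 2 = |√a - √b| * |√a - √b| := by rw [abs_mul_abs_self, sq]
    _ ≤ |√a + √b| * |√a - √b| := by gcongr
    _ = |a - b| := by
      rw [← abs_mul, ← mul_self_sub_mul_self, Real.mul_self_sqrt ha, Real.mul_self_sqrt hb]

theorem norm_lreg_sqrtVec_sub_sq_le {p : G →₀ ℝ} (hp : 0 ≤ p) (s : G) :
    ‖lreg s (sqrtVec p) - sqrtVec p‖ ^ 2 ≤ ‖Finsupp.linearCombination ℝ (displacement s) p‖ := by
  have hterm (h : G) : ‖(lreg s (sqrtVec p) - sqrtVec p) h‖ ^ 2 ≤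
      ‖Finsupp.linearCombination ℝ (displacement s) p h‖ := by
    have hcoe : (lreg s (sqrtVec p) - sqrtVec p) h = ((√(p (s⁻¹ * h)) - √(p h) : ℝ) : ℂ) := by
      rw [lp.coeFn_sub, Pi.sub_apply, lreg_apply, Complex.ofReal_sub]
      rfl
    rw [hcoe, Complex.norm_real, linearCombination_displacement_apply, Real.norm_eq_abs, sq_abs]
    exact sqrt_sub_sqrt_sq_le (hp _) (hp _)
  have hleft := lp.hasSum_norm (p := 2) (by norm_num) (lreg s (sqrtVec p) - sqrtVec p)
  have hright := lp.hasSum_norm (p := 1) (by norm_num)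
    (Finsupp.linearCombination ℝ (displacement s) p)
  simp only [ENNReal.toReal_ofNat, Real.rpow_ofNat, ENNReal.toReal_one,
    Real.rpow_one] at hleft hright
  exact hasSum_le hterm hleft hright

end Reiter

section StabilizerState

/-- The vector state of a unit vector `ξ`. -/
def RealState.ofVector {H : Type*} [NormedAddCommGroup H] [InnerProductSpace ℂ H] [CompleteSpace H]
    (ξ : H) (hξ : ‖ξ‖ = 1) : RealState (H →L[ℂ] H) where
  toFun T := (inner ℂ ξ (T ξ)).re
  map_add' S T := by rw [add_apply, inner_add_right, Complex.add_re]
  map_smul' c T := by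
    change (inner ℂ ξ ((c : ℂ) • T ξ)).re = c * (inner ℂ ξ (T ξ)).re
    rw [inner_smul_right, Complex.re_ofReal_mul]
  map_one' := by
    change RCLike.re (inner ℂ ξ ξ) = 1
    rw [inner_self_eq_norm_sq, hξ, one_pow]
  map_star' T := by
    rw [ContinuousLinearMap.star_eq_adjoint, ContinuousLinearMap.adjoint_inner_right,
      ← inner_conj_symm, Complex.conj_re]
  map_star_mul_self_nonneg' T := by
    rw [ContinuousLinearMap.star_eq_adjoint]
    change 0 ≤ RCLike.re (inner ℂ ξ (ContinuousLinearMap.adjoint T (T ξ)))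
    rw [ContinuousLinearMap.adjoint_inner_right]
    exact inner_self_nonneg

/-- The vector state of `√p`. -/
def sqrtState {ι : Type*} {p : ι →₀ ℝ} (hp : p ∈ finiteProb ι) :
    RealState (ℓ²(ι, ℂ) →L[ℂ] ℓ²(ι, ℂ)) :=
  RealState.ofVector (sqrtVec p) (norm_sqrtVec hp)

theorem sqrtState_mulOperator {ι : Type*} {p : ι →₀ ℝ} (hp : p ∈ finiteProb ι) (F : ℓ^∞(ι, ℝ)) :
    sqrtState hp (mulOperator F) = Finsupp.linearCombination ℝ F p :=
  congrArg Complex.re (inner_sqrtVec_mulOperator hp.1 F)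

theorem le_sqrtState_lreg_sub_one {p : G →₀ ℝ} (hp : p ∈ finiteProb G) (s : G) :
    -‖Finsupp.linearCombination ℝ (displacement s) p‖ ≤ sqrtState hp (lreg s - 1) := by
  have hsub := norm_sub_sq (𝕜 := ℂ) (lreg s (sqrtVec p)) (sqrtVec p)
  rw [norm_lreg_apply, norm_sqrtVec hp, inner_re_symm] at hsub
  have hle := norm_lreg_sqrtVec_sub_sq_le hp.1 s
  rw [map_sub, (sqrtState hp).map_one]
  change _ ≤ RCLike.re (inner ℂ (sqrtVec p) (lreg s (sqrtVec p))) - 1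
  linarith [norm_nonneg (Finsupp.linearCombination ℝ (displacement s) p)]

theorem le_sqrtState_linearCombination {p : G →₀ ℝ} (hp : p ∈ finiteProb G) {S : Subgroup G}
    {c : S →₀ ℝ} (hc : 0 ≤ c) {ε : ℝ}
    (hε : ∀ s ∈ c.support, ‖Finsupp.linearCombination ℝ (displacement (s : G)) p‖ ≤ ε) :
    -(ε * c.sum fun _ ↦ id) ≤
      sqrtState hp (Finsupp.linearCombination ℝ (fun s : S ↦ lreg (s : G) - 1) c) := by
  rw [Finsupp.linearCombination_apply, map_finsuppSum, Finsupp.sum, Finsupp.sum, ← neg_mul,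
    Finset.mul_sum]
  refine Finset.sum_le_sum fun s hs ↦ ?_
  rw [map_smul, smul_eq_mul, mul_comm, id]
  gcongr
  · exact hc s
  · linarith [hε s hs, le_sqrtState_lreg_sub_one hp (s : G)]

namespace Mean

variable (m : Mean G)

/-- The operators `∑ c_s (λ_s - 1) + F` with `c_s ≥ 0`, `s` in the stabilizer of `m` and
`m(F) = 0`; a state which is nonnegative on them extends `m` and is trivial on the stabilizer. -/
def stabilizerCone : Set (ℓ²(G, ℂ) →L[ℂ] ℓ²(G, ℂ)) :=
  (Finsupp.linearCombination ℝ fun s : m.stabilizer ↦ lreg (s : G) - 1).coprod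
    mulOperator.toLinearMap '' Set.Ici 0 ×ˢ {F | m F = 0}

theorem convex_stabilizerCone : Convex ℝ m.stabilizerCone :=
  ((convex_Ici 0).prod (convex_hyperplane ⟨map_add m, map_smul m⟩ 0)).linear_image _

theorem lreg_sub_one_mem_stabilizerCone (s : m.stabilizer) :
    lreg (s : G) - 1 ∈ m.stabilizerCone :=
  ⟨(Finsupp.single s 1, 0), ⟨Finsupp.single_nonneg.2 zero_le_one, map_zero m⟩, by simp⟩

theorem mulOperator_mem_stabilizerCone {F : ℓ^∞(G, ℝ)} (hF : m F = 0) :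
    mulOperator F ∈ m.stabilizerCone :=
  ⟨(0, F), ⟨le_refl (0 : m.stabilizer →₀ ℝ), hF⟩, by simp⟩

theorem disjoint_reLt_stabilizerCone : Disjoint (reLt _ 0) m.stabilizerCone := by
  rw [Set.disjoint_right]
  rintro _ ⟨⟨c, F⟩, ⟨hc, hF⟩, rfl⟩ hlt
  obtain ⟨δ, hδ, hacc⟩ := hlt
  set C := c.sum fun _ ↦ id
  have hC : 0 ≤ C := Finset.sum_nonneg fun s _ ↦ hc s
  set ε := -δ / (1 + C)
  have hε : ε * (1 + C) = -δ := div_mul_cancel₀ _ (by linarith)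
  obtain ⟨p, hp, hpF, hpc⟩ := m.exists_almost_invariant c.support hF
    (show 0 < ε from div_pos (neg_pos.2 hδ) (by linarith))
  have hle := (sqrtState hp).le_of_isAccretive hacc
  have hsum := le_sqrtState_linearCombination hp hc fun s hs ↦ (hpc s hs).le
  have hdiag : -ε < sqrtState hp (mulOperator F) := by
    rw [sqrtState_mulOperator]
    exact (abs_lt.1 hpF).1
  rw [LinearMap.coprod_apply, map_add] at hle
  change _ + sqrtState hp (mulOperator F) ≤ δ at hle
  linarith

theorem exists_realState_trivial_on_stabilizer :
    ∃ ω : RealState (ℓ²(G, ℂ) →L[ℂ] ℓ²(G, ℂ)),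
      (∀ F, ω (mulOperator F) = m F) ∧ ∀ s ∈ m.stabilizer, ω (lreg s) = 1 := by
  obtain ⟨ω, hω⟩ := exists_realState_forall_le m.convex_stabilizerCone
    ⟨_, m.lreg_sub_one_mem_stabilizerCone 1⟩ m.disjoint_reLt_stabilizerCone
  refine ⟨ω, fun F ↦ ?_, fun s hs ↦ ?_⟩
  · have hnonneg (H : ℓ^∞(G, ℝ)) : m H ≤ ω (mulOperator H) := by
      have h := hω _ (m.mulOperator_mem_stabilizerCone (F := H - algebraMap ℝ _ (m H))
        (by rw [map_sub, m.map_const, sub_self]))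
      rw [map_sub, map_sub, AlgHom.commutes, Algebra.algebraMap_eq_smul_one, map_smul, ω.map_one,
        smul_eq_mul, mul_one] at h
      linarith
    have hneg := hnonneg (-F)
    rw [map_neg, map_neg, map_neg] at hneg
    exact le_antisymm (by linarith) (hnonneg F)
  · have hnorm : ‖lreg s‖ ≤ 1 :=
      ContinuousLinearMap.opNorm_le_bound _ zero_le_one fun ξ ↦ by rw [norm_lreg_apply, one_mul]
    have hge := hω _ (m.lreg_sub_one_mem_stabilizerCone ⟨s, hs⟩)
    rw [map_sub, ω.map_one] at hge
    exact le_antisymm ((ω.map_le_norm _).trans hnorm) (by linarith)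

end Mean

end StabilizerState

section Freeness

/-- The restriction of a state to a C*-subalgebra. -/
def RealState.restrict {B : Type*} [CStarAlgebra B] (ρ : RealState B) (A : StarSubalgebra ℂ B)
    [IsClosed (A : Set B)] : RealState A where
  toLinearMap := ρ.toLinearMap ∘ₗ A.subtype.toLinearMap.restrictScalars ℝ
  map_one' := ρ.map_one
  map_star' a := ρ.map_star a
  map_star_mul_self_nonneg' a := ρ.map_star_mul_self_nonneg a

theorem norm_deltaOne : ‖(deltaOne : ℓ²(G, ℂ))‖ = 1 := by
  classical rw [deltaOne_eq_single, lp.norm_single (by norm_num), norm_one]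

attribute [local instance] isClosed_redCstar

theorem restrict_ofVector_deltaOne (a : redCstar G) :
    (RealState.ofVector deltaOne norm_deltaOne).restrict (redCstar G) a = (tau G a).re := by
  rw [tau_apply, ← inner_deltaOne]
  rfl

variable {K : Set (Mean G)} {m : Mean G}

theorem exists_forall_conj_notMem_stabilizer_of_isCstarSimple (hG : IsCstarSimple G)
    (hm : IsExtremeInMinimalIdeal K m) {T : Finset G} (hT : 1 ∉ T) :
    ∃ g, ∀ t ∈ T, g⁻¹ * t * g ∉ m.stabilizer := by
  classical
  obtain ⟨ω, hω, hωu⟩ := m.exists_realState_trivial_on_stabilizer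
  obtain ⟨ψ, hψ, hψnull⟩ := ω.exists_extension_vanishing_nullSubmodule hG
    ((RealState.ofVector deltaOne norm_deltaOne).restrict (redCstar G))
  have hdiag : (regularRep G).diagMean ω = m := DFunLike.ext _ _ hω
  have hψu (s : G) (hs : s ≠ 1) : ψ (lreg s) = 0 := by
    rw [← coe_uu, hψ, restrict_ofVector_deltaOne, tau_uu, if_neg hs, Complex.zero_re]
  have hmem (g : G) : lreg g ∈ redCstar G := coe_uu g ▸ (uu g).2
  refine (regularRep G).exists_forall_conj_notMem_stabilizer hm (redCstar_subset_closure_span G)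
    hmem ?_ hωu hψu hψnull hT
  rw [hdiag, hm.mul_self]

/-- If `ρ` vanishes off a subgroup, conjugating `T` off it makes `ρ` vanish on `span (u '' T)`. -/
theorem CovariantRep.exists_map_conj_lt {B : Type*} [CStarAlgebra B] (π : CovariantRep G B)
    (hm : IsExtremeInMinimalIdeal K m)
    (hfree : ∀ T : Finset G, 1 ∉ T → ∃ g, ∀ t ∈ T, g⁻¹ * t * g ∉ m.stabilizer)
    {X : B} (hX : X ∈ Submodule.span ℂ ((fun g ↦ (π.u g : B)) '' {1}ᶜ)) (ρ : RealState B)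
    {ε : ℝ} (hε : 0 < ε) : ∃ g, ρ (π.u g⁻¹ * X * π.u g) < ε := by
  by_contra! hle
  obtain ⟨c, hc, rfl⟩ := (Finsupp.mem_span_image_iff_linearCombination ℂ).1 hX
  obtain ⟨g, hg⟩ := hfree c.support fun h ↦ hc h rfl
  obtain ⟨μ, hμ⟩ := π.exists_diagMean_average_mul_eq hm ρ
  set X := Finsupp.linearCombination ℂ (fun g ↦ (π.u g : B)) c
  have hge : ε ≤ π.average μ ρ (π.u g⁻¹ * X * π.u g) := π.le_average μ fun h ↦ by
    have h' := hle (g * h)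
    rwa [mul_inv_rev, ← u_mul_u, ← u_mul_u, mul_assoc, mul_assoc, ← mul_assoc _ X,
      ← mul_assoc _ (π.u g : B), ← mul_assoc] at h'
  have hconj : (π.u g⁻¹ * X * π.u g : B) = ∑ t ∈ c.support, c t • (π.u (g⁻¹ * t * g) : B) := by
    simp only [X, Finsupp.linearCombination_apply, Finsupp.sum, Finset.mul_sum, Finset.sum_mul,
      mul_smul_comm, smul_mul_assoc, u_mul_u]
  rw [hconj, map_sum, Finset.sum_eq_zero fun t ht ↦ π.map_smul_u_eq_zero hμ hm (hg t ht) _] at hge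
  exact hge.not_gt hε

end Freeness

section Averages

variable {V : Type*} [NormedAddCommGroup V] [NormedSpace ℂ V] {M : Type*} [Monoid M]
  (α : M →* (V →L[ℂ] V))

/-- The convex combinations of the operators of a representation. -/
def averages : Submonoid (V →L[ℂ] V) where
  carrier := convexHull ℝ (Set.range α)
  one_mem' := subset_convexHull ℝ _ ⟨1, map_one α⟩
  mul_mem' {Φ Ψ} hΦ hΨ := by
    have hconv := convex_convexHull ℝ (Set.range α)
    have hleft (g : M) : α g * Ψ ∈ convexHull ℝ (Set.range α) := by
      refine convexHull_min ?_ (hconv.linear_preimage (LinearMap.mulLeft ℝ (α g))) hΨ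
      rintro _ ⟨h, rfl⟩
      exact subset_convexHull ℝ _ ⟨g * h, map_mul α g h⟩
    refine convexHull_min ?_ (hconv.linear_preimage (LinearMap.mulRight ℝ Ψ)) hΦ
    rintro _ ⟨g, rfl⟩
    exact hleft g

variable {α}

theorem apply_mem_of_mem_averages {S : Set V} (hS : Convex ℝ S) {x : V} (hx : ∀ g, α g x ∈ S)
    {Φ : V →L[ℂ] V} (hΦ : Φ ∈ averages α) : Φ x ∈ S := by
  have hconv : Convex ℝ {Φ : V →L[ℂ] V | Φ x ∈ S} := fun _ hΦ _ hΨ _ _ ha hb hab ↦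
    hS hΦ hΨ ha hb hab
  refine convexHull_min ?_ hconv hΦ
  rintro _ ⟨g, rfl⟩
  exact hx g

theorem exists_mem_averages_forall_mem {W S : Set V} (hW : Convex ℝ W)
    (hαW : ∀ g, Set.MapsTo (α g) W W) (hS : Convex ℝ S) (hαS : ∀ g, Set.MapsTo (α g) S S)
    (hWS : ∀ x ∈ W, ∃ Φ ∈ averages α, Φ x ∈ S) (s : Finset V) (hs : ∀ x ∈ s, x ∈ W) :
    ∃ Φ ∈ averages α, ∀ x ∈ s, Φ x ∈ S := by
  classical
  induction s using Finset.induction_on with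
  | empty => exact ⟨1, one_mem _, fun _ h ↦ absurd h (Finset.notMem_empty _)⟩
  | insert x s _ ih =>
    rw [Finset.forall_mem_insert] at hs
    obtain ⟨Φ, hΦ, hΦS⟩ := ih hs.2
    obtain ⟨Ψ, hΨ, hΨS⟩ := hWS (Φ x) (apply_mem_of_mem_averages hW (fun g ↦ hαW g hs.1) hΦ)
    refine ⟨Ψ * Φ, mul_mem hΨ hΦ, Finset.forall_mem_insert .. |>.2 ⟨hΨS, fun y hy ↦ ?_⟩⟩
    exact apply_mem_of_mem_averages hS (fun g ↦ hαS g (hΦS y hy)) hΨ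

end Averages

section Conjugation

variable {A : Type*} [NormedRing A] [NormedAlgebra ℂ A] [StarRing A] {M : Type*} [Monoid M]

/-- The representation by conjugations associated with a unitary representation. -/
def conjRep (u : M →* unitary A) : M →* (A →L[ℂ] A) where
  toFun g := .mul ℂ A (u g) ∘L (ContinuousLinearMap.mul ℂ A).flip (star (u g))
  map_one' := by
    ext a
    simp
  map_mul' g h := by
    ext a
    simp [mul_assoc]

variable {u : M →* unitary A}

theorem conjRep_apply (g : M) (a : A) : conjRep u g a = u g * a * star (u g : A) :=
  (mul_assoc ..).symm

theorem apply_one_of_mem_averages {Φ : A →L[ℂ] A} (hΦ : Φ ∈ averages (conjRep u)) : Φ 1 = 1 :=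
  apply_mem_of_mem_averages (convex_singleton 1) (fun g ↦ by
    rw [conjRep_apply, mul_one, Unitary.mul_star_self_of_mem (u g).2, Set.mem_singleton_iff]) hΦ

end Conjugation

section UnitaryAverages

variable {A : Type*} [CStarAlgebra A]

theorem isAccretive_of_mem_reLt {a : A} {ε : ℝ} (ha : a ∈ reLt A ε) : IsAccretive (ε • 1 - a) := by
  obtain ⟨δ, hδ, hacc⟩ := ha
  have hsplit : ε • 1 - a = δ • 1 - a + (ε - δ) • 1 := by rw [sub_smul]; abel
  exact hsplit ▸ hacc.add (isAccretive_one.smul (sub_nonneg.2 hδ.le))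

theorem conj_mem_reLt {a : A} {ε : ℝ} (ha : a ∈ reLt A ε) (u : unitary A) :
    (u * a * star u : A) ∈ reLt A ε := by
  obtain ⟨δ, hδ, hacc⟩ := ha
  have h := hacc.conj (star u : A)
  rw [star_star, mul_sub, sub_mul, mul_smul_comm, smul_mul_assoc, mul_one,
    Unitary.mul_star_self_of_mem u.2] at h
  exact ⟨δ, hδ, h⟩

variable {M : Type*} [Monoid M] {u : M →* unitary A}

theorem norm_apply_le_of_mem_averages {Φ : A →L[ℂ] A} (hΦ : Φ ∈ averages (conjRep u)) (a : A) :
    ‖Φ a‖ ≤ ‖a‖ := by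
  rw [← mem_closedBall_zero_iff]
  refine apply_mem_of_mem_averages (convex_closedBall 0 ‖a‖) (fun g ↦ ?_) hΦ
  rw [mem_closedBall_zero_iff, conjRep_apply, ← Unitary.coe_star, CStarRing.norm_mul_coe_unitary,
    CStarRing.norm_coe_unitary_mul]

theorem exists_mem_averages_apply_mem_reLt {a : A} {ε : ℝ}
    (ha : ∀ ρ : RealState A, ∃ g, ρ (conjRep u g a) < ε) :
    ∃ Φ ∈ averages (conjRep u), Φ a ∈ reLt A ε := by
  by_contra! hcon
  set orbitHull := {b | ∃ Φ ∈ averages (conjRep u), Φ a = b}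
  have hconv : Convex ℝ orbitHull := by
    rintro _ ⟨Φ, hΦ, rfl⟩ _ ⟨Ψ, hΨ, rfl⟩ s t hs ht hst
    exact ⟨s • Φ + t • Ψ, convex_convexHull ℝ _ hΦ hΨ hs ht hst, rfl⟩
  have hdisj : Disjoint (reLt A ε) orbitHull := by
    rw [Set.disjoint_right]
    rintro _ ⟨Φ, hΦ, rfl⟩
    exact hcon Φ hΦ
  obtain ⟨ρ, hρ⟩ := exists_realState_forall_le hconv ⟨_, 1, one_mem _, rfl⟩ hdisj
  obtain ⟨g, hg⟩ := ha ρ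
  exact (hρ _ ⟨_, subset_convexHull ℝ _ ⟨g, rfl⟩, rfl⟩).not_gt hg

variable {W : Submodule ℂ A}

theorem exists_mem_averages_norm_apply_le (hW : ∀ g, ∀ a ∈ W, conjRep u g a ∈ W)
    (hstate : ∀ a ∈ W, ∀ ρ : RealState A, ∀ ε > 0, ∃ g, ρ (conjRep u g a) < ε)
    {ε : ℝ} (hε : 0 < ε) {a : A} (ha : a ∈ W) : ∃ Φ ∈ averages (conjRep u), ‖Φ a‖ ≤ ε := by
  classical
  obtain ⟨Φ, hΦ, hlt⟩ := exists_mem_averages_forall_mem (W.restrictScalars ℝ).convex hW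
    (convex_reLt (ε / 2)) (fun g b hb ↦ conjRep_apply (u := u) g b ▸ conj_mem_reLt hb (u g))
    (fun b hb ↦ exists_mem_averages_apply_mem_reLt fun ρ ↦ hstate b hb ρ _ (half_pos hε))
    (({1, -1, Complex.I, -Complex.I} : Finset ℂ).image (· • a))
    (Finset.forall_mem_image.2 fun z _ ↦ W.smul_mem z ha)
  refine ⟨Φ, hΦ, (norm_le_of_forall_isAccretive (half_pos hε).le fun z hz ↦ ?_).trans_eq
    (mul_div_cancel₀ ε two_ne_zero)⟩
  rw [← map_smul]
  exact isAccretive_of_mem_reLt (hlt _ (Finset.mem_image_of_mem _ (by simpa using hz)))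

theorem exists_mem_averages_forall_norm_apply_le (hW : ∀ g, ∀ a ∈ W, conjRep u g a ∈ W)
    (hstate : ∀ a ∈ W, ∀ ρ : RealState A, ∀ ε > 0, ∃ g, ρ (conjRep u g a) < ε)
    {ε : ℝ} (hε : 0 < ε) (s : Finset A) (hs : ∀ a ∈ s, a ∈ W) :
    ∃ Φ ∈ averages (conjRep u), ∀ a ∈ s, ‖Φ a‖ ≤ ε := by
  have hball (a : A) : a ∈ Metric.closedBall 0 ε ↔ ‖a‖ ≤ ε := mem_closedBall_zero_iff
  simp only [← hball]
  refine exists_mem_averages_forall_mem (W.restrictScalars ℝ).convex hW (convex_closedBall 0 ε)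
    (fun g a ha ↦ ?_) (fun a ha ↦ ?_) s hs
  · exact (hball _).2 ((norm_apply_le_of_mem_averages
      (subset_convexHull ℝ _ ⟨g, rfl⟩) a).trans ((hball a).1 ha))
  · simp only [hball]
    exact exists_mem_averages_norm_apply_le hW hstate hε ha

end UnitaryAverages

section TraceAveraging

/-- The left regular representation as a homomorphism to the unitary group of `C*_λ(G)`. -/
def uuHom : G →* unitary (redCstar G) where
  toFun g := ⟨uu g, by
    rw [Unitary.mem_iff, star_uu, ← uu_mul, ← uu_mul, inv_mul_cancel, mul_inv_cancel, uu_one]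
    exact ⟨rfl, rfl⟩⟩
  map_one' := Subtype.ext uu_one
  map_mul' g h := Subtype.ext (uu_mul g h)

/-- The action of `G` on `C*_λ(G)` by conjugations. -/
def conjAct : G →* (redCstar G →L[ℂ] redCstar G) := conjRep uuHom

theorem conjAct_inv_apply (g : G) (a : redCstar G) : conjAct g⁻¹ a = uu g⁻¹ * a * uu g := by
  unfold conjAct
  rw [conjRep_apply]
  change uu g⁻¹ * a * star (uu g⁻¹) = _
  rw [star_uu, inv_inv]

theorem dualAct_eq_apply_conjAct_inv (g : G) (φ : WeakDual ℂ (redCstar G)) (a : redCstar G) :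
    dualAct g φ a = φ (conjAct g⁻¹ a) := by
  rw [conjAct_inv_apply, dualAct_apply]

theorem tau_conjAct (g : G) (a : redCstar G) : tau G (conjAct g a) = tau G a := by
  rw [← inv_inv g, ← dualAct_eq_apply_conjAct_inv, dualAct_tau]

theorem norm_tau_le (a : redCstar G) : ‖tau G a‖ ≤ ‖a‖ := by
  rw [tau_apply, ← inner_deltaOne]
  have h := norm_inner_le_norm (𝕜 := ℂ) deltaOne ((a : ℓ²(G, ℂ) →L[ℂ] ℓ²(G, ℂ)) deltaOne)
  have h' := (a : ℓ²(G, ℂ) →L[ℂ] ℓ²(G, ℂ)).le_opNorm deltaOne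
  rw [norm_deltaOne, mul_one] at h'
  rw [norm_deltaOne, one_mul] at h
  exact h.trans h'

theorem sub_tau_smul_one_mem_span {a : redCstar G} (ha : a ∈ Submodule.span ℂ (Set.range uu)) :
    a - tau G a • 1 ∈ Submodule.span ℂ (uu '' {1}ᶜ) := by
  classical
  induction ha using Submodule.span_induction with
  | mem a ha =>
    obtain ⟨g, rfl⟩ := ha
    rw [tau_uu]
    split_ifs with h
    · rw [h, uu_one, one_smul, sub_self]
      exact zero_mem _
    · rw [zero_smul, sub_zero]
      exact Submodule.subset_span ⟨g, h, rfl⟩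
  | zero => rw [map_zero, zero_smul, sub_zero]; exact zero_mem _
  | add a b _ _ ha hb => rw [map_add, add_smul, add_sub_add_comm]; exact add_mem ha hb
  | smul c a _ ha =>
    rw [map_smul, smul_eq_mul, mul_smul, ← smul_sub]
    exact Submodule.smul_mem _ c ha

theorem exists_mem_span_norm_sub_lt {a : redCstar G} (ha : tau G a = 0) {ε : ℝ} (hε : 0 < ε) :
    ∃ b ∈ Submodule.span ℂ (uu '' ({1}ᶜ : Set G)), ‖a - b‖ < ε := by
  obtain ⟨b, hb, hab⟩ := (dense_span_uu G).exists_dist_lt a (half_pos hε)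
  rw [dist_eq_norm] at hab
  refine ⟨_, sub_tau_smul_one_mem_span hb, ?_⟩
  have hsplit : a - (b - tau G b • 1) = (a - b) - tau G (a - b) • 1 := by
    rw [map_sub, ha, zero_sub, neg_smul]
    abel
  calc ‖a - (b - tau G b • 1)‖ ≤ ‖a - b‖ + ‖tau G (a - b) • (1 : redCstar G)‖ :=
        hsplit ▸ norm_sub_le _ _
    _ ≤ ‖a - b‖ + ‖tau G (a - b)‖ * 1 := by
        grw [norm_smul, show ‖(1 : redCstar G)‖ ≤ 1 from ContinuousLinearMap.norm_id_le]
    _ ≤ ‖a - b‖ + ‖a - b‖ := by grw [mul_one, norm_tau_le]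
    _ < ε := by linarith

theorem coe_mem_span_regularRep {T : Set G} {b : redCstar G}
    (hb : b ∈ Submodule.span ℂ (uu '' T)) : (b : ℓ²(G, ℂ) →L[ℂ] ℓ²(G, ℂ)) ∈
      Submodule.span ℂ ((fun g ↦ ((regularRep G).u g : ℓ²(G, ℂ) →L[ℂ] ℓ²(G, ℂ))) '' T) := by
  refine Submodule.span_induction ?_ (zero_mem _) (fun _ _ _ _ ↦ add_mem)
    (fun c _ _ ↦ Submodule.smul_mem _ c) hb
  rintro _ ⟨g, hg, rfl⟩
  exact Submodule.subset_span ⟨g, hg, (coe_uu g).symm⟩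

theorem coe_conjAct (g : G) (a : redCstar G) :
    (conjAct g a : ℓ²(G, ℂ) →L[ℂ] ℓ²(G, ℂ)) = conjRep (regularRep G).u g a := by
  rw [← inv_inv g, conjAct_inv_apply, conjRep_apply, ← Unitary.coe_star, Unitary.star_eq_inv,
    ← map_inv, inv_inv, MulMemClass.coe_mul, MulMemClass.coe_mul, coe_uu, coe_uu]
  rfl

theorem exists_mem_averages_forall_coe_eq {Φ : (ℓ²(G, ℂ) →L[ℂ] ℓ²(G, ℂ)) →L[ℂ] _}
    (hΦ : Φ ∈ averages (conjRep (regularRep G).u)) :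
    ∃ Ψ ∈ averages (conjAct (G := G)), ∀ a, (Ψ a : ℓ²(G, ℂ) →L[ℂ] ℓ²(G, ℂ)) = Φ a := by
  refine convexHull_min (t := {Φ : (ℓ²(G, ℂ) →L[ℂ] ℓ²(G, ℂ)) →L[ℂ] _ | ∃ Ψ ∈ averages
    (conjRep (uuHom (G := G))), ∀ a, (Ψ a : ℓ²(G, ℂ) →L[ℂ] ℓ²(G, ℂ)) = Φ a}) ?_ ?_ hΦ
  · rintro _ ⟨g, rfl⟩
    exact ⟨_, subset_convexHull ℝ _ ⟨g, rfl⟩, coe_conjAct g⟩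
  · rintro Φ₁ ⟨Ψ₁, hΨ₁, h₁⟩ Φ₂ ⟨Ψ₂, hΨ₂, h₂⟩ s t hs ht hst
    refine ⟨s • Ψ₁ + t • Ψ₂, convex_convexHull ℝ _ hΨ₁ hΨ₂ hs ht hst, fun a ↦ ?_⟩
    change s • (Ψ₁ a : ℓ²(G, ℂ) →L[ℂ] ℓ²(G, ℂ)) + t • (Ψ₂ a : ℓ²(G, ℂ) →L[ℂ] ℓ²(G, ℂ)) =
      s • Φ₁ a + t • Φ₂ a
    rw [h₁, h₂]

theorem exists_map_conjRep_lt (hG : IsCstarSimple G) {a : redCstar G} (ha : tau G a = 0)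
    (ρ : RealState (ℓ²(G, ℂ) →L[ℂ] ℓ²(G, ℂ))) {ε : ℝ} (hε : 0 < ε) :
    ∃ g, ρ (conjRep (regularRep G).u g a) < ε := by
  obtain ⟨K, m, hm⟩ := exists_isExtremeInMinimalIdeal G
  obtain ⟨b, hb, hab⟩ := exists_mem_span_norm_sub_lt ha (half_pos hε)
  obtain ⟨g, hg⟩ := (regularRep G).exists_map_conj_lt hm
    (fun T hT ↦ exists_forall_conj_notMem_stabilizer_of_isCstarSimple hG hm hT)
    (coe_mem_span_regularRep hb) ρ (half_pos hε)
  have hb : ρ (conjRep (regularRep G).u g⁻¹ b) < ε / 2 := by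
    rwa [conjRep_apply, (regularRep G).star_u, inv_inv]
  have hsub : ρ (conjRep (regularRep G).u g⁻¹ (a - b)) ≤ ‖a - b‖ := (ρ.map_le_norm _).trans
    (norm_apply_le_of_mem_averages (subset_convexHull ℝ _ ⟨g⁻¹, rfl⟩) _)
  rw [map_sub, map_sub] at hsub
  exact ⟨g⁻¹, by linarith⟩

theorem exists_mem_averages_forall_norm_sub_tau_le (hG : IsCstarSimple G) {ε : ℝ} (hε : 0 < ε)
    (s : Finset (redCstar G)) :
    ∃ Φ ∈ averages (conjAct (G := G)), ∀ a ∈ s, ‖Φ a - tau G a • 1‖ ≤ ε := by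
  classical
  have htau (a : redCstar G) : tau G (a - tau G a • 1) = 0 := by
    rw [map_sub, map_smul, tau_one, smul_eq_mul, mul_one, sub_self]
  obtain ⟨Φ, hΦ, hle⟩ := exists_mem_averages_forall_norm_apply_le (u := (regularRep G).u)
    (W := (LinearMap.ker (tau G).toLinearMap).map (redCstar G).subtype.toLinearMap)
    (by
      rintro g _ ⟨a, ha, rfl⟩
      exact ⟨_, (tau_conjAct g a).trans ha, coe_conjAct g a⟩)
    (by
      rintro _ ⟨a, ha, rfl⟩ ρ ε hε
      exact exists_map_conjRep_lt hG ha ρ hε)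
    hε (s.image fun a ↦ ((a - tau G a • 1 : redCstar G) : ℓ²(G, ℂ) →L[ℂ] ℓ²(G, ℂ)))
    (Finset.forall_mem_image.2 fun a _ ↦ ⟨_, htau a, rfl⟩)
  obtain ⟨Ψ, hΨ, hcoe⟩ := exists_mem_averages_forall_coe_eq hΦ
  refine ⟨Ψ, hΨ, fun a ha ↦ ?_⟩
  have h := hle _ (Finset.mem_image_of_mem _ ha)
  rwa [← hcoe, map_sub, map_smul, apply_one_of_mem_averages (u := uuHom) hΨ] at h

end TraceAveraging

section ClosedConvexOrbit

theorem exists_eq_one_forall_mem_eq_zero {E : Type*} [NormedAddCommGroup E] [NormedSpace ℂ E]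
    {S : Submodule ℂ E} (hS : IsClosed (S : Set E)) {x : E} (hx : x ∉ S) :
    ∃ f : E →L[ℂ] ℂ, f x = 1 ∧ ∀ y ∈ S, f y = 0 := by
  have hne : S.mkQ x ≠ 0 := by rwa [Submodule.mkQ_apply, ne_eq, Submodule.Quotient.mk_eq_zero]
  obtain ⟨f, hf⟩ := SeparatingDual.exists_eq_one (R := ℂ) hne
  refine ⟨f.comp S.mkQL, hf, fun y hy ↦ ?_⟩
  have hy0 : S.mkQL y = 0 := (Submodule.Quotient.mk_eq_zero S).2 hy
  rw [ContinuousLinearMap.comp_apply, hy0, map_zero]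

theorem exists_weakDual_eq_one_forall_mem_eq_zero {A : Type*} [NormedRing A] [NormedAlgebra ℂ A]
    {I : TwoSidedIdeal A} (hI : IsClosed (I : Set A)) (htop : I ≠ ⊤) :
    ∃ φ : WeakDual ℂ A, φ 1 = 1 ∧ ∀ a ∈ I, φ a = 0 :=
  exists_eq_one_forall_mem_eq_zero (S := I.asIdeal.restrictScalars ℂ) hI
    fun h ↦ htop ((TwoSidedIdeal.one_mem_iff I).1 h)

theorem eq_zero_of_mem_closure_convexHull_dualAct {I : TwoSidedIdeal (redCstar G)}
    {φ ψ : WeakDual ℂ (redCstar G)} (hφ : ∀ a ∈ I, φ a = 0)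
    (hψ : ψ ∈ closure (convexHull ℝ {ψ : WeakDual ℂ (redCstar G) | ∃ g : G, ψ = dualAct g φ}))
    {a : redCstar G} (ha : a ∈ I) : ψ a = 0 := by
  refine closure_minimal (convexHull_min ?_ ?_)
    (isClosed_eq (WeakDual.eval_continuous a) continuous_const) hψ
  · rintro _ ⟨g, rfl⟩
    exact hφ _ (I.mul_mem_right _ _ (I.mul_mem_left _ _ ha))
  · intro ψ (hψ : ψ a = 0) χ (hχ : χ a = 0) s t _ _ _
    change s • ψ a + t • χ a = 0
    rw [hψ, hχ, smul_zero, smul_zero, add_zero]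

theorem eq_bot_of_forall_tau_eq_zero {I : TwoSidedIdeal (redCstar G)}
    (hI : ∀ a ∈ I, tau G a = 0) : I = ⊥ :=
  le_bot_iff.1 fun _ ha ↦ (TwoSidedIdeal.mem_bot _).2 <|
    eq_zero_of_tau_star_mul_self_eq_zero (hI _ (I.mul_mem_left _ _ ha))

/-- The functional `φ ∘ Φ`, as an `ℝ`-linear function of the operator `Φ`. -/
def compWeakDual {E : Type*} [NormedAddCommGroup E] [NormedSpace ℂ E] (φ : WeakDual ℂ E) :
    (E →L[ℂ] E) →ₗ[ℝ] WeakDual ℂ E where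
  toFun Φ := StrongDual.toWeakDual ((WeakDual.toStrongDual φ).comp Φ)
  map_add' Φ Ψ := ContinuousLinearMap.ext fun a ↦ map_add φ (Φ a) (Ψ a)
  map_smul' c Φ := ContinuousLinearMap.ext fun a ↦
    map_smul ((WeakDual.toStrongDual φ).restrictScalars ℝ) c (Φ a)

theorem compWeakDual_mem_convexHull_dualAct (φ : WeakDual ℂ (redCstar G))
    {Φ : redCstar G →L[ℂ] redCstar G} (hΦ : Φ ∈ averages (conjAct (G := G))) :
    compWeakDual φ Φ ∈
      convexHull ℝ {ψ : WeakDual ℂ (redCstar G) | ∃ g : G, ψ = dualAct g φ} := by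
  have hmap := (compWeakDual φ).image_convexHull _ ▸ Set.mem_image_of_mem (compWeakDual φ) hΦ
  refine convexHull_mono ?_ hmap
  rintro _ ⟨_, ⟨g, rfl⟩, rfl⟩
  refine ⟨g⁻¹, ContinuousLinearMap.ext fun a ↦ ?_⟩
  change φ (conjAct g a) = dualAct g⁻¹ φ a
  rw [dualAct_eq_apply_conjAct_inv, inv_inv]

theorem tendsto_compWeakDual {E : Type*} [NormedAddCommGroup E] [NormedSpace ℂ E]
    (φ : WeakDual ℂ E) {ι : Type*} {l : Filter ι} {Φ : ι → E →L[ℂ] E} {ψ : WeakDual ℂ E}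
    {T : E → E} (hψ : ∀ a, ψ a = φ (T a)) (h : ∀ a, Filter.Tendsto (Φ · a) l (nhds (T a))) :
    Filter.Tendsto (fun i ↦ compWeakDual φ (Φ i)) l (nhds ψ) := by
  rw [tendsto_iff_forall_eval_tendsto_topDualPairing]
  intro a
  change Filter.Tendsto (fun i ↦ φ (Φ i a)) l (nhds (ψ a))
  rw [hψ]
  exact ((map_continuous φ).tendsto _).comp (h a)

theorem tendsto_of_forall_norm_sub_le_one_div {α E : Type*} [NormedAddCommGroup E]
    {F : Finset α × ℕ → α → E} {T : α → E}
    (h : ∀ i, ∀ a ∈ i.1, ‖F i a - T a‖ ≤ 1 / ((i.2 : ℝ) + 1)) (a : α) :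
    Filter.Tendsto (F · a) Filter.atTop (nhds (T a)) := by
  rw [tendsto_iff_norm_sub_tendsto_zero]
  have hmem : ∀ᶠ i : Finset α × ℕ in Filter.atTop, a ∈ i.1 :=
    (Filter.eventually_ge_atTop ({a}, 0)).mono fun i hi ↦ hi.1 (Finset.mem_singleton_self a)
  refine squeeze_zero' (.of_forall fun _ ↦ norm_nonneg _) (hmem.mono fun i hi ↦ h i a hi) ?_
  rw [← Filter.prod_atTop_atTop_eq]
  exact tendsto_one_div_add_atTop_nhds_zero_nat.comp Filter.tendsto_snd

theorem smul_tau_mem_closure_of_isCstarSimple (hG : IsCstarSimple G)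
    (φ : WeakDual ℂ (redCstar G)) : φ 1 • tau G ∈
      closure (convexHull ℝ {ψ : WeakDual ℂ (redCstar G) | ∃ g : G, ψ = dualAct g φ}) := by
  classical
  choose Φ hΦ hle using fun i : Finset (redCstar G) × ℕ ↦
    exists_mem_averages_forall_norm_sub_tau_le hG (Nat.one_div_pos_of_nat (α := ℝ) (n := i.2)) i.1
  have hlim (a : redCstar G) : (φ 1 • tau G) a = φ (tau G a • 1) :=
    (mul_comm ..).trans (map_smul φ (tau G a) 1).symm
  exact mem_closure_of_tendsto
    (tendsto_compWeakDual φ hlim (tendsto_of_forall_norm_sub_le_one_div (T := (tau G · • 1)) hle))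
    (.of_forall fun i ↦ compWeakDual_mem_convexHull_dualAct φ (hΦ i))

end ClosedConvexOrbit

/-- A discrete group is C*-simple if and only if for every bounded linear functional `φ` on
`C*_λ(G)` the weak* closed convex hull of the `G`-orbit of `φ` contains `φ(1)τ_λ`. -/
theorem cstarSimple_iff_scaled_trace_in_closed_convex_orbit (G : Type u) [Group G] :
    IsCstarSimple G ↔
      ∀ φ : WeakDual ℂ (redCstar G),
        φ 1 • tau G ∈
          closure (convexHull ℝ {ψ : WeakDual ℂ (redCstar G) | ∃ g : G, ψ = dualAct g φ}) := by
  refine ⟨smul_tau_mem_closure_of_isCstarSimple, fun h I hI ↦ or_iff_not_imp_right.2 fun htop ↦ ?_⟩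
  obtain ⟨φ, hφ1, hφI⟩ := exists_weakDual_eq_one_forall_mem_eq_zero hI htop
  have htau := h φ
  rw [hφ1, one_smul] at htau
  exact eq_bot_of_forall_tau_eq_zero fun a ha ↦
    eq_zero_of_mem_closure_convexHull_dualAct hφI htau ha
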